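/- arXiv:2511.01509 — 5 statements merged into one kernel-verified Lean document; each statement's English description precedes it below -/
import Mathlib

section
/- (Faudree–Schelp; Kopylov) Let k ≥ 3 and n ≥ 0 be integers, and write n = s(k−1) + r with s ≥ 0 and 0 ≤ r ≤ k−2. Then ex(n, P_k) = s·C(k−1, 2) + C(r, 2). -/
open SimpleGraph

/-- The number of edges of a simple graph. -/
noncomputable def edgeCount {V : Type*} (G : SimpleGraph V) : ℕ := G.edgeSet.ncard

/-- `H` occurs as a subgraph of `G` (there is an injective map preserving adjacency). -/
def ContainsCopy {V W : Type*} (G : SimpleGraph V) (H : SimpleGraph W) : Prop :=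
  ∃ f : W → V, Function.Injective f ∧ ∀ a b : W, H.Adj a b → G.Adj (f a) (f b)

/-- The Turán number `ex(n, H)`: the maximum number of edges of an `H`-free
simple graph on `n` vertices. -/
noncomputable def exNum (n : ℕ) {W : Type*} (H : SimpleGraph W) : ℕ :=
  sSup {m | ∃ G : SimpleGraph (Fin n), ¬ ContainsCopy G H ∧ edgeCount G = m}

/-- `h(n,k,a) = C(k-a,2) + a(n-k+a)`. -/
def hFun (n k a : ℕ) : ℕ := (k - a).choose 2 + a * (n - k + a)

/-- `c(n,m,ℓ) = C(m-1,2) + t·C(ℓ-1,2) + C(r,2)` where `n = (m-1) + t(ℓ-1) + r`,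
`0 ≤ r < ℓ-1`. -/
def cFun (n m l : ℕ) : ℕ :=
  (m - 1).choose 2 + ((n - (m - 1)) / (l - 1)) * ((l - 1).choose 2)
    + ((n - (m - 1)) % (l - 1)).choose 2

/-! A disjoint union of graphs without a path on `m + 1` vertices has no such path either, so
`ex(·, P_{m+1})` is superadditive; conversely a disconnected graph splits into two smaller ones.
The number of edges `c(n)` of the union of `n / m` cliques of size `m` and a clique on the remaining
vertices is superadditive as well, so only connected graphs on `n ≥ m` vertices matter.

Let `G` be connected and edge-maximal without a path on `m + 1` vertices. A non-edge `uv` then comes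
from two disjoint paths starting at `u` and `v` with more than `m` vertices altogether. If `A` and
`B` have induced minimum degrees `a` and `b` with `a + b ≥ m`, take a longest such pair of paths
starting in `A` and `B`: all neighbours of `u` in `A` and of `v` in `B` lie on the pair, and Pósa's
crossing argument yields a path on `m + 1` vertices. Hence `A` and `B` are completely joined. So a
maximal set of large minimum degree is a clique `H`, and no set larger than `H` has minimum degree
above `m - #H`, since it would be joined to `H`. Consequently, for some `a < m / 2`, repeatedly
deleting a vertex of degree at most `a` reduces `G` to `m - a` vertices, which gives at most
`hFun n m a` edges. By convexity of binomial coefficients this is at most `c(n)`. -/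

namespace PathTuran

open Finset

section CliqueUnion

theorem two_mul_cast_choose_two (n : ℕ) : 2 * (n.choose 2 : ℤ) = n * (n - 1) := by
  rw [Nat.choose_two_right, ← Nat.cast_two, ← Nat.cast_mul,
    Nat.mul_div_cancel' (Nat.even_mul_pred_self n).two_dvd]
  cases n <;> simp

theorem choose_two_add_choose_two_le (r x y : ℕ) :
    (r + x).choose 2 + (r + y).choose 2 ≤ (r + x + y).choose 2 + r.choose 2 := by
  have hxy : (0 : ℤ) ≤ x * y := by positivity
  have h₁ := two_mul_cast_choose_two (r + x)
  have h₂ := two_mul_cast_choose_two (r + y)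
  have h₃ := two_mul_cast_choose_two (r + x + y)
  have h₄ := two_mul_cast_choose_two r
  push_cast at h₁ h₂ h₃
  zify
  linarith

theorem mul_le_choose_two_add (a r : ℕ) : a * r ≤ (a + 1).choose 2 + r.choose 2 := by
  have h₁ := two_mul_cast_choose_two (a + 1)
  have h₂ := two_mul_cast_choose_two r
  have hra : (0 : ℤ) ≤ (r - a) * (r - a - 1) := by
    rcases le_or_gt (r : ℤ) a with h | h
    · exact mul_nonneg_of_nonpos_of_nonpos (by lia) (by lia)
    · exact mul_nonneg (by lia) (by lia)
  push_cast at h₁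
  zify
  linarith

/-- The number of edges of the disjoint union of as many cliques of size `m` as fit into `n`
vertices and one clique on the remaining `n % m` vertices. -/
def cliqueUnionEdges (m n : ℕ) : ℕ := n / m * m.choose 2 + (n % m).choose 2

theorem cliqueUnionEdges_of_lt {m n : ℕ} (h : n < m) : cliqueUnionEdges m n = n.choose 2 := by
  simp [cliqueUnionEdges, Nat.div_eq_of_lt h, Nat.mod_eq_of_lt h]

theorem cliqueUnionEdges_mul_add {m : ℕ} (hm : 0 < m) (s n : ℕ) :
    cliqueUnionEdges m (s * m + n) = s * m.choose 2 + cliqueUnionEdges m n := by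
  rw [cliqueUnionEdges, cliqueUnionEdges, Nat.mul_add_mod', add_comm (s * m),
    Nat.add_mul_div_right n s hm]
  ring

theorem cliqueUnionEdges_add_left {m : ℕ} (hm : 0 < m) (n : ℕ) :
    cliqueUnionEdges m (m + n) = m.choose 2 + cliqueUnionEdges m n := by
  simpa using cliqueUnionEdges_mul_add hm 1 n

theorem choose_two_add_choose_two_le_cliqueUnionEdges {m a b : ℕ} (ha : a < m) (hb : b < m) :
    a.choose 2 + b.choose 2 ≤ cliqueUnionEdges m (a + b) := by
  rcases lt_or_ge (a + b) m with h | h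
  · simpa [cliqueUnionEdges_of_lt h] using choose_two_add_choose_two_le 0 a b
  · obtain ⟨r, hr⟩ := Nat.exists_eq_add_of_le h
    have := choose_two_add_choose_two_le r (a - r) (b - r)
    rw [show r + (a - r) = a by omega, show r + (b - r) = b by omega,
      show a + (b - r) = m by omega] at this
    rwa [hr, cliqueUnionEdges_add_left (by omega), cliqueUnionEdges_of_lt (by omega)]

theorem cliqueUnionEdges_add_le {m : ℕ} (hm : 0 < m) (a b : ℕ) :
    cliqueUnionEdges m a + cliqueUnionEdges m b ≤ cliqueUnionEdges m (a + b) := by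
  have h := choose_two_add_choose_two_le_cliqueUnionEdges (Nat.mod_lt a hm) (Nat.mod_lt b hm)
  calc cliqueUnionEdges m a + cliqueUnionEdges m b
      = (a / m + b / m) * m.choose 2 + ((a % m).choose 2 + (b % m).choose 2) := by
        simp only [cliqueUnionEdges]; ring
    _ ≤ (a / m + b / m) * m.choose 2 + cliqueUnionEdges m (a % m + b % m) := by gcongr
    _ = cliqueUnionEdges m (a + b) := by
        rw [← cliqueUnionEdges_mul_add hm]
        congr 1
        conv_rhs => rw [← Nat.div_add_mod' a m, ← Nat.div_add_mod' b m]
        ring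

theorem choose_two_sub_add_le {m a : ℕ} (ha : 2 * a + 1 ≤ m) :
    (m - a).choose 2 + a * a + (a + 1).choose 2 ≤ m.choose 2 := by
  obtain ⟨c, rfl⟩ := Nat.exists_eq_add_of_le ha
  have hac : (0 : ℤ) ≤ a * c := by positivity
  have h₁ := two_mul_cast_choose_two (a + 1 + c)
  have h₂ := two_mul_cast_choose_two (a + 1)
  have h₃ := two_mul_cast_choose_two (2 * a + 1 + c)
  push_cast at h₁ h₂ h₃
  rw [show 2 * a + 1 + c - a = a + 1 + c by omega]
  zify
  linarith

theorem hFun_le_cliqueUnionEdges {m n a : ℕ} (ha : 2 * a + 1 ≤ m) (hn : m ≤ n) :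
    hFun n m a ≤ cliqueUnionEdges m n := by
  obtain ⟨j, rfl⟩ := Nat.exists_eq_add_of_le hn
  have ham : a * m ≤ m.choose 2 := by
    have h := Nat.mul_le_mul_left m (show 2 * a ≤ m - 1 by omega)
    rw [Nat.choose_two_right, Nat.le_div_iff_mul_le two_pos]
    linarith
  calc hFun (m + j) m a
      = (m - a).choose 2 + a * (j / m * m + j % m + a) := by
        rw [hFun, Nat.add_sub_cancel_left, Nat.div_add_mod']
    _ = j / m * (a * m) + ((m - a).choose 2 + a * a + a * (j % m)) := by ring
    _ ≤ j / m * (a * m) + ((m - a).choose 2 + a * a + ((a + 1).choose 2 + (j % m).choose 2)) := by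
        gcongr
        exact mul_le_choose_two_add a (j % m)
    _ ≤ j / m * m.choose 2 + (m.choose 2 + (j % m).choose 2) := by
        have := choose_two_sub_add_le ha
        gcongr ?_ + ?_
        · gcongr
        · omega
    _ = cliqueUnionEdges m (m + j) := by
        rw [cliqueUnionEdges_add_left (by omega), cliqueUnionEdges]
        ring

end CliqueUnion

section Lists

variable {α : Type*}

theorem exists_append_head? (p : α → Prop) (l : List α) :
    ∃ l₁ l₂, l = l₁ ++ l₂ ∧ (∀ x ∈ l₁, ¬ p x) ∧ ∀ x ∈ l₂.head?, p x := by
  classical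
  refine ⟨l.takeWhile (¬ p ·), l.dropWhile (¬ p ·), List.takeWhile_append_dropWhile.symm,
    fun x hx => by simpa using List.mem_takeWhile_imp hx, fun x hx => ?_⟩
  have h := List.head?_dropWhile_not (¬ p ·) l
  rw [Option.mem_def.1 hx] at h
  simpa using h

theorem exists_append_getLast? (p : α → Prop) (l : List α) :
    ∃ l₁ l₂, l = l₁ ++ l₂ ∧ (∀ x ∈ l₁.getLast?, p x) ∧ ∀ x ∈ l₂, ¬ p x := by
  obtain ⟨l₁, l₂, hl, h₁, h₂⟩ := exists_append_head? p l.reverse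
  exact ⟨l₂.reverse, l₁.reverse, by rw [← List.reverse_append, ← hl, List.reverse_reverse],
    by simpa using h₂, by simpa using h₁⟩

theorem countP_dropLast_add_countP_tail_le {p q : α → Prop} [DecidablePred p] [DecidablePred q]
    {l : List α} (h : l.IsChain fun a b => ¬ (p a ∧ q b)) :
    l.dropLast.countP (p ·) + l.tail.countP (q ·) ≤ l.length - 1 := by
  induction h with
  | nil => simp
  | singleton => simp
  | @cons_cons a b l hab h ih =>
    simp only [List.dropLast_cons_cons, List.tail_cons, List.countP_cons, decide_eq_true_eq,
      List.length_cons, add_tsub_cancel_right] at ih ⊢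
    split_ifs with hp hq <;> lia

theorem countP_add_countP_tail_le {p q : α → Prop} [DecidablePred p] [DecidablePred q]
    {l : List α} (h : l.IsChain fun a b => ¬ (p a ∧ q b)) :
    l.countP (p ·) + l.tail.countP (q ·) ≤ l.length := by
  have hl := countP_dropLast_add_countP_tail_le h
  rcases l.eq_nil_or_concat' with rfl | ⟨l, z, rfl⟩
  · simp
  · simp only [List.dropLast_concat, List.countP_append, List.countP_singleton, List.length_append,
      List.length_singleton] at hl ⊢
    split_ifs <;> omega

theorem countP_add_countP_tail_lt {p q : α → Prop} [DecidablePred p] [DecidablePred q]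
    {l : List α} (h : l.IsChain fun a b => ¬ (p a ∧ q b)) (hl : ∃ z ∈ l.getLast?, ¬ p z) :
    l.countP (p ·) + l.tail.countP (q ·) < l.length := by
  obtain ⟨z, hz, hpz⟩ := hl
  obtain ⟨l, rfl⟩ := List.getLast?_eq_some_iff.1 hz
  have hle := countP_dropLast_add_countP_tail_le h
  rw [List.dropLast_concat, List.length_append, List.length_singleton] at hle
  rw [List.countP_append, List.countP_singleton, decide_eq_false hpz, List.length_append,
    List.length_singleton]
  simpa using Nat.lt_succ_of_le hle

end Lists

section Paths

variable {V : Type*} {G : SimpleGraph V} {m : ℕ} {u v : V} {p q l : List V}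

theorem isChain_adj_reverse : l.reverse.IsChain G.Adj ↔ l.IsChain G.Adj := by
  rw [List.isChain_reverse]
  exact ⟨fun h => h.imp fun _ _ => Adj.symm, fun h => h.imp fun _ _ => Adj.symm⟩

theorem pathGraph_isContained_iff {k : ℕ} :
    pathGraph k ⊑ G ↔ ∃ l : List V, l.IsChain G.Adj ∧ l.Nodup ∧ k ≤ l.length := by
  constructor
  · rintro ⟨f⟩
    refine ⟨List.ofFn f, List.isChain_ofFn.2 fun i hi => f.toHom.map_adj ?_,
      List.nodup_ofFn.2 f.injective, List.length_ofFn.ge⟩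
    simp [pathGraph_adj]
  · rintro ⟨l, hl, hn, hk⟩
    refine ⟨⟨⟨fun i => l[i], fun {i j} hij => ?_⟩, fun i j hij => ?_⟩⟩
    · rcases pathGraph_adj.1 hij with hij | hij
      · simpa only [Fin.getElem_fin, hij] using hl.getElem i (by omega)
      · simpa only [Fin.getElem_fin, hij] using (hl.getElem j (by omega)).symm
    · exact Fin.ext (hn.getElem_inj_iff.1 hij)

theorem length_le_of_free (hG : (pathGraph (m + 1)).Free G) (hl : l.IsChain G.Adj)
    (hn : l.Nodup) : l.length ≤ m := by
  by_contra! h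
  exact hG (pathGraph_isContained_iff.2 ⟨l, hl, hn, h⟩)

theorem card_le_of_isClique_of_free (hG : (pathGraph (m + 1)).Free G) {H : Finset V}
    (hH : G.IsClique H) : #H ≤ m := by
  rw [← H.length_toList]
  refine length_le_of_free hG (List.Pairwise.isChain ?_) H.nodup_toList
  exact H.nodup_toList.imp_of_mem fun ha hb => hH (mem_toList.1 ha) (mem_toList.1 hb)

/-- The number of neighbours of `u` among the entries of `l`. -/
def degOn (G : SimpleGraph V) [DecidableRel G.Adj] (u : V) (l : List V) : ℕ :=
  l.countP (G.Adj u ·)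

section degOn

variable [DecidableRel G.Adj]

theorem degOn_append : degOn G u (p ++ q) = degOn G u p + degOn G u q :=
  List.countP_append

theorem degOn_cons_self : degOn G u (u :: l) = degOn G u l :=
  List.countP_cons_of_neg (by simp)

theorem degOn_eq_zero : degOn G u l = 0 ↔ ∀ x ∈ l, ¬ G.Adj u x := by
  simp [degOn, List.countP_eq_zero]

theorem degOn_le_length : degOn G u l ≤ l.length :=
  List.countP_le_length

theorem card_filter_adj_le_degOn {A : Finset V} (h : ∀ w ∈ A, G.Adj u w → w ∈ l) :
    #{w ∈ A | G.Adj u w} ≤ degOn G u l := by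
  classical
  rw [degOn, List.countP_eq_length_filter]
  refine (card_le_card fun w hw => ?_).trans (List.toFinset_card_le _)
  rw [mem_filter] at hw
  simpa [hw.2] using h w hw.1 hw.2

end degOn

/-- `u :: p` and `v :: q` are disjoint paths of `G` with more than `m` vertices altogether. In a
graph without a path on `m + 1` vertices this is the obstruction to adding the edge `uv`. -/
structure LongPair (G : SimpleGraph V) (m : ℕ) (u v : V) (p q : List V) : Prop where
  chain_left : (u :: p).IsChain G.Adj
  chain_right : (v :: q).IsChain G.Adj
  nodup : (u :: p ++ v :: q).Nodup
  lt_length : m < (u :: p ++ v :: q).length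

namespace LongPair

theorem symm (h : LongPair G m u v p q) : LongPair G m v u q p where
  chain_left := h.chain_right
  chain_right := h.chain_left
  nodup := List.perm_append_comm.nodup_iff.1 h.nodup
  lt_length := List.perm_append_comm.length_eq ▸ h.lt_length

theorem cons (h : LongPair G m u v p q) {w : V} (hw : G.Adj w u) (hw' : w ∉ u :: p ++ v :: q) :
    LongPair G m w v (u :: p) q where
  chain_left := h.chain_left.cons_cons hw
  chain_right := h.chain_right
  nodup := List.nodup_cons.2 ⟨hw', h.nodup⟩
  lt_length := h.lt_length.trans (Nat.lt_succ_self _)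

/-- The path runs through the tail `X` of `p` backwards, jumps to `u`, follows `p` along `F`, and
jumps to `v`; only the segment `Y` is lost. -/
theorem reroute (hG : (pathGraph (m + 1)).Free G) {F Y X : List V}
    (h : LongPair G m u v (F ++ (Y ++ X)) q) (hF : ∀ x ∈ (u :: F).getLast?, G.Adj v x)
    (hX : ∀ x ∈ X.head?, G.Adj u x) : X.length + (F.length + 1) + (q.length + 1) ≤ m := by
  have hsplit : u :: (F ++ (Y ++ X)) = u :: F ++ (Y ++ X) := rfl
  have hchain : (X.reverse ++ (u :: F ++ v :: q)).IsChain G.Adj := by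
    have hFYX := hsplit ▸ h.chain_left
    refine (isChain_adj_reverse.2 hFYX.right_of_append.right_of_append).append
      (hFYX.left_of_append.append h.chain_right fun x hx y hy => ?_) fun x hx y hy => ?_
    · obtain rfl : v = y := by simpa using hy
      exact (hF x hx).symm
    · obtain rfl : u = y := by simpa using hy
      exact (hX x (by simpa using hx)).symm
  have hperm : (X.reverse ++ (u :: F ++ v :: q)).Perm (u :: F ++ X ++ v :: q) := by
    rw [← List.append_assoc]
    exact (((List.reverse_perm X).append_right _).trans List.perm_append_comm).append_right _
  have hsub : (u :: F ++ X ++ v :: q).Sublist (u :: (F ++ (Y ++ X)) ++ v :: q) := by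
    rw [hsplit, List.append_assoc, List.append_assoc]
    exact ((List.sublist_append_right Y X).append_right _).append_left _
  have hlen := length_le_of_free hG hchain (hperm.nodup_iff.2 (h.nodup.sublist hsub))
  simp only [List.length_append, List.length_reverse, List.length_cons] at hlen
  omega

theorem isChain_not_adj (hG : (pathGraph (m + 1)).Free G) (h : LongPair G m u v p q) :
    (u :: p).IsChain fun a b => ¬ (G.Adj v a ∧ G.Adj u b) := by
  rw [List.isChain_iff_forall_rel_of_append_cons_cons]
  rintro a b E X hEX ⟨hva, hub⟩
  obtain ⟨F, hF⟩ : ∃ F, E ++ [a] = u :: F := by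
    cases E <;> simp_all
  obtain rfl : p = F ++ b :: X := by
    simpa [hF] using (show u :: p = E ++ [a] ++ b :: X by simp [hEX])
  have hlast : (u :: F).getLast? = some a := by simp [← hF]
  have hle := h.reroute (Y := []) hG (by simpa [hlast] using hva) (by simpa using hub)
  have hlt := h.lt_length
  simp only [List.length_append, List.length_cons] at hle hlt
  omega

theorem not_adj_getLast (hG : (pathGraph (m + 1)).Free G) (h : LongPair G m u v p q) :
    ∃ z ∈ (u :: p).getLast?, ¬ G.Adj v z := by
  by_contra! hlast
  have hle := LongPair.reroute (F := p) (Y := []) (X := []) hG (by simpa using h) hlast (by simp)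
  have hlt := h.lt_length
  simp only [List.length_append, List.length_cons, List.length_nil] at hle hlt
  omega

/-- Cut `u :: p` behind the last neighbour of `v` into `u :: F` and `W`, and drop from `W` the
stretch `Y` before the next neighbour of `u`. Rerouting shows that what remains of the two paths has
at most `m` vertices, while no edge `ab` can be crossed by `va` and `ub`, so the degrees of `u` and
`v` add up to less than the number of these vertices. -/
theorem not_adj [DecidableRel G.Adj] (hG : (pathGraph (m + 1)).Free G)
    (h : LongPair G m u v p q)
    (hdeg : m ≤ degOn G u (u :: p ++ v :: q) + degOn G v (u :: p ++ v :: q)) :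
    ∀ x ∈ u :: p, ¬ G.Adj v x := by
  by_contra! hcon
  obtain ⟨F, W, hFW, hF, hW⟩ := exists_append_getLast? (G.Adj v) (u :: p)
  obtain ⟨Y, X, rfl, hY, hX⟩ := exists_append_head? (G.Adj u) W
  obtain ⟨F, rfl⟩ : ∃ F', F = u :: F' := by
    cases F with
    | nil => grind
    | cons => simp_all
  obtain rfl : p = F ++ (Y ++ X) := by simpa using hFW
  have hmain := h.reroute hG hF hX
  have hFcount : degOn G v (u :: F) + degOn G u F ≤ F.length + 1 :=
    countP_add_countP_tail_le (List.IsChain.left_of_append (l₂ := Y ++ X) (h.isChain_not_adj hG))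
  have hqcount : degOn G u (v :: q) + degOn G v q < q.length + 1 :=
    countP_add_countP_tail_lt (h.symm.isChain_not_adj hG) (h.symm.not_adj_getLast hG)
  have hYu : degOn G u Y = 0 := degOn_eq_zero.2 hY
  have hXu : degOn G u X ≤ X.length := degOn_le_length
  have hWv : degOn G v (Y ++ X) = 0 := degOn_eq_zero.2 hW
  rw [hFW] at hdeg
  simp only [degOn_append, degOn_cons_self] at hdeg hWv
  omega

end LongPair

theorem exists_perm_concat_isChain {c : V} (hl : (u :: p).IsChain G.Adj)
    (hlast : ∀ x ∈ p.getLast?, G.Adj u x) (hc : c ∈ u :: p) :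
    ∃ l, (l ++ [c]).Perm (u :: p) ∧ (l ++ [c]).IsChain G.Adj := by
  obtain ⟨E, D, hED⟩ := List.append_of_mem hc
  have hsplit : u :: p = E ++ [c] ++ D := by simp [hED]
  refine ⟨D ++ E, ?_, ?_⟩
  · rw [hsplit, List.append_assoc]
    exact List.perm_append_comm
  · rw [hsplit, List.isChain_append] at hl
    rw [List.append_assoc, List.isChain_append]
    refine ⟨hl.2.1, hl.1, fun x hx y hy => ?_⟩
    obtain rfl : u = y := by cases E <;> simp_all
    refine (hlast x ?_).symm
    cases E with
    | nil => simp_all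
    | cons e E =>
      obtain ⟨rfl, rfl⟩ : u = e ∧ p = E ++ ([c] ++ D) := by simpa using hED
      rw [List.getLast?_append_of_ne_nil _ (by simp), List.getLast?_append, Option.mem_def.1 hx,
        Option.some_or, Option.mem_def]

theorem exists_isChain_between (hG : G.Preconnected) {A B : Set V} (hAB : Disjoint A B)
    (hA : A.Nonempty) (hB : B.Nonempty) :
    ∃ s ∈ A, ∃ t ∈ B, ∃ M : List V, ([s] ++ M ++ [t]).IsChain G.Adj ∧ M.Nodup ∧
      ∀ x ∈ M, x ∉ A ∧ x ∉ B := by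
  obtain ⟨a, ha⟩ := hA
  obtain ⟨b, hb⟩ := hB
  classical
  obtain ⟨w, hw⟩ := (hG a b).exists_isPath
  have hchain := w.isChain_adj_support
  have hnodup := hw.support_nodup
  have hend : w.support.getLast? = some b := by
    rw [List.getLast?_eq_some_getLast w.support_ne_nil, w.getLast_support]
  obtain ⟨P, Q, hPQ, hP, hQ⟩ := exists_append_getLast? (· ∈ A) w.support
  obtain ⟨M, R, rfl, hM, hR⟩ := exists_append_head? (· ∈ B) Q
  have hbA : b ∉ A := hAB.notMem_of_mem_right hb
  obtain ⟨P, s, rfl⟩ : ∃ P' s, P = P' ++ [s] := by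
    refine P.eq_nil_or_concat'.resolve_left ?_
    rintro rfl
    exact hQ a (hPQ ▸ w.start_mem_support) ha
  obtain ⟨t, R, rfl⟩ : ∃ t R', R = t :: R' := by
    refine List.exists_cons_of_ne_nil ?_
    rintro rfl
    rw [hPQ, List.append_nil, List.getLast?_append, Option.or_eq_some_iff] at hend
    rcases hend with hend | ⟨-, hend⟩
    · exact hM b (List.mem_of_getLast? hend) hb
    · exact hbA (hP b hend)
  have hsplit : w.support = P ++ ([s] ++ M ++ [t] ++ R) := by simp [hPQ]
  rw [hsplit] at hchain hnodup
  exact ⟨s, hP s (by simp), t, hR t (by simp), M, hchain.right_of_append.left_of_append,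
    hnodup.of_append_right.of_append_left.of_append_left.of_append_right,
    fun x hx => ⟨hQ x (List.mem_append_left _ hx), hM x hx⟩⟩

/-- Two disjoint cycles: a connecting path enters and leaves each of them at a point where the cycle
can be opened, which produces a path through all their vertices. -/
theorem length_add_length_le_of_closed (hconn : G.Preconnected) (hG : (pathGraph (m + 1)).Free G)
    (hp : (u :: p).IsChain G.Adj) (hq : (v :: q).IsChain G.Adj) (hn : (u :: p ++ v :: q).Nodup)
    (hu : ∀ x ∈ p.getLast?, G.Adj u x) (hv : ∀ x ∈ q.getLast?, G.Adj v x) :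
    (u :: p).length + (v :: q).length ≤ m := by
  rw [List.nodup_append'] at hn
  obtain ⟨s, hs, t, ht, M, hM, hMn, hMd⟩ := exists_isChain_between hconn
    (A := {x | x ∈ u :: p}) (B := {x | x ∈ v :: q}) (Set.disjoint_left.2 hn.2.2)
    ⟨u, List.mem_cons_self⟩ ⟨v, List.mem_cons_self⟩
  obtain ⟨p', hp', hps⟩ := exists_perm_concat_isChain hp hu hs
  obtain ⟨q', hq', hqt⟩ := exists_perm_concat_isChain hq hv ht
  have hqr : ([t] ++ q'.reverse).IsChain G.Adj := by simpa using isChain_adj_reverse.2 hqt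
  have hchain := hps.append_overlap (hM.append_overlap hqr (by simp)) (by simp)
  have hq'' : ([t] ++ q'.reverse).Perm (v :: q) :=
    ((List.reverse_perm q').append_left _).trans (List.perm_append_comm.trans hq')
  have hperm : (p' ++ [s] ++ (M ++ [t] ++ q'.reverse)).Perm (u :: p ++ (M ++ v :: q)) := by
    rw [List.append_assoc M]
    exact hp'.append (hq''.append_left M)
  have hnodup : (u :: p ++ (M ++ v :: q)).Nodup := by
    rw [List.nodup_append', List.nodup_append']
    refine ⟨hn.1, ⟨hMn, hn.2.1, fun x hx => (hMd x hx).2⟩, fun x hx hx' => ?_⟩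
    rcases List.mem_append.1 hx' with hxM | hxq
    · exact (hMd x hxM).1 hx
    · exact hn.2.2 hx hxq
  have hlen := length_le_of_free hG (by simpa using hchain) (hperm.nodup_iff.2 hnodup)
  rw [hperm.length_eq, List.length_append, List.length_append] at hlen
  omega

/-- Otherwise `u` and `v` have neighbours only on their own paths. Cutting each path behind the last
such neighbour leaves two disjoint cycles with more than `m` vertices, contrary to
`length_add_length_le_of_closed`. -/
theorem LongPair.degOn_add_degOn_lt [DecidableRel G.Adj] (hconn : G.Preconnected)
    (hG : (pathGraph (m + 1)).Free G) (h : LongPair G m u v p q) :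
    degOn G u (u :: p ++ v :: q) + degOn G v (u :: p ++ v :: q) < m := by
  by_contra! hdeg
  have hvp : degOn G v (u :: p) = 0 := degOn_eq_zero.2 (h.not_adj hG hdeg)
  have huq : degOn G u (v :: q) = 0 := by
    refine degOn_eq_zero.2 (h.symm.not_adj hG ?_)
    simp only [degOn_append] at hdeg ⊢
    omega
  obtain ⟨p₁, p₂, rfl, hp₁, hp₂⟩ := exists_append_getLast? (G.Adj u) p
  obtain ⟨q₁, q₂, rfl, hq₁, hq₂⟩ := exists_append_getLast? (G.Adj v) q
  have hlen := length_add_length_le_of_closed hconn hG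
    (List.IsChain.left_of_append (l₂ := p₂) h.chain_left)
    (List.IsChain.left_of_append (l₂ := q₂) h.chain_right)
    (h.nodup.sublist (.append (by simp) (by simp))) hp₁ hq₁
  have hu₁ : degOn G u p₁ ≤ p₁.length := degOn_le_length
  have hv₁ : degOn G v q₁ ≤ q₁.length := degOn_le_length
  rw [degOn_append, degOn_append, huq, hvp, degOn_cons_self, degOn_cons_self, degOn_append,
    degOn_append, degOn_eq_zero.2 hp₂, degOn_eq_zero.2 hq₂] at hdeg
  simp only [List.length_cons] at hlen
  omega

/-- Any two non-adjacent vertices are the starting points of two disjoint paths with more than `m`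
vertices altogether: this is what edge-maximality among graphs without a path on `m + 1` vertices
amounts to. -/
def Saturated (G : SimpleGraph V) (m : ℕ) : Prop :=
  ∀ ⦃u v⦄, u ≠ v → ¬ G.Adj u v → ∃ p q, LongPair G m u v p q

theorem isChain_of_isChain_sup_edge (hl : l.IsChain (G ⊔ edge u v).Adj) (h : u ∉ l ∨ v ∉ l) :
    l.IsChain G.Adj := by
  refine hl.imp_of_mem_imp fun a b ha hb hab => ?_
  rcases sup_adj .. |>.1 hab with hab | hab
  · exact hab
  · obtain ⟨⟨rfl, rfl⟩ | ⟨rfl, rfl⟩, -⟩ := edge_adj .. |>.1 hab <;> simp_all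

theorem longPair_of_isChain_sup_edge (hn : (p ++ u :: v :: q).Nodup)
    (hlen : m < (p ++ u :: v :: q).length) (hl : (p ++ u :: v :: q).IsChain (G ⊔ edge u v).Adj) :
    LongPair G m u v p.reverse q := by
  rw [List.append_cons] at hn hlen hl
  have hperm : (u :: p.reverse).Perm (p ++ [u]) := by simpa using List.reverse_perm (p ++ [u])
  have hd := (List.nodup_append'.1 hn).2.2
  refine ⟨?_, isChain_of_isChain_sup_edge hl.right_of_append (.inl fun hu => hd (by simp) hu),
    (hperm.append_right _).nodup_iff.2 hn, (hperm.append_right _).length_eq ▸ hlen⟩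
  have hpu := isChain_of_isChain_sup_edge hl.left_of_append (.inr fun hv => hd hv (by simp))
  simpa using isChain_adj_reverse.2 hpu

theorem saturated_of_maximal (hG : Maximal (pathGraph (m + 1)).Free G) : Saturated G m := by
  intro u v huv hadj
  have hcont : pathGraph (m + 1) ⊑ G ⊔ edge u v := by
    by_contra hfree
    exact hadj (hG.2 hfree le_sup_left (by simp [edge_adj, huv]))
  obtain ⟨l, hl, hn, hlen⟩ := pathGraph_isContained_iff.1 hcont
  have hnl : ¬ l.IsChain G.Adj := fun h => (length_le_of_free hG.1 h hn).not_gt hlen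
  rw [List.isChain_iff_forall_rel_of_append_cons_cons] at hnl
  push Not at hnl
  obtain ⟨a, b, p, q, rfl, hab⟩ := hnl
  have habe : (G ⊔ edge u v).Adj a b := List.isChain_iff_forall_rel_of_append_cons_cons.1 hl rfl
  rcases sup_adj .. |>.1 habe with h | h
  · exact absurd h hab
  obtain ⟨⟨rfl, rfl⟩ | ⟨rfl, rfl⟩, -⟩ := edge_adj .. |>.1 h
  · exact ⟨_, _, longPair_of_isChain_sup_edge hn hlen hl⟩
  · exact ⟨_, _, (longPair_of_isChain_sup_edge hn hlen (by rwa [edge_comm])).symm⟩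

section MinDegree

/-- The subgraph of `G` induced on `S` has minimum degree at least `d`. -/
def MinDegreeOn (G : SimpleGraph V) [DecidableRel G.Adj] (d : ℕ) (S : Finset V) : Prop :=
  ∀ x ∈ S, d ≤ #{y ∈ S | G.Adj x y}

variable [DecidableRel G.Adj]

theorem minDegreeOn_of_isClique {S : Finset V} (hS : G.IsClique S) :
    MinDegreeOn G (#S - 1) S := by
  classical
  intro x hx
  rw [← card_erase_of_mem hx]
  refine card_le_card fun y hy => ?_
  rw [mem_erase] at hy
  exact mem_filter.2 ⟨hy.2, hS hx hy.2 hy.1.symm⟩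

theorem MinDegreeOn.insert [DecidableEq V] {S : Finset V} {d : ℕ} (hS : MinDegreeOn G d S)
    (hd : d ≤ #S) (hu : ∀ v ∈ S, G.Adj u v) : MinDegreeOn G d (insert u S) := by
  intro x hx
  refine le_trans ?_ (card_le_card (filter_subset_filter _ (subset_insert u S)))
  rcases mem_insert.1 hx with rfl | hx
  · rwa [filter_true_of_mem hu]
  · exact hS x hx

variable [Finite V]

theorem adj_of_minDegreeOn (hconn : G.Preconnected) (hG : (pathGraph (m + 1)).Free G)
    (hsat : Saturated G m) {A B : Finset V} {a b : ℕ} (hA : MinDegreeOn G a A)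
    (hB : MinDegreeOn G b B) (hab : m ≤ a + b) (hu : u ∈ A) (hv : v ∈ B) (huv : u ≠ v) :
    G.Adj u v := by
  by_contra hadj
  let lengths : Set ℕ :=
    {n | ∃ u ∈ A, ∃ v ∈ B, ∃ p q, LongPair G m u v p q ∧ (u :: p ++ v :: q).length = n}
  have hne : lengths.Nonempty := by
    obtain ⟨p, q, h⟩ := hsat huv hadj
    exact ⟨_, u, hu, v, hv, p, q, h, rfl⟩
  have hbdd : BddAbove lengths := by
    have := Fintype.ofFinite V
    refine ⟨Fintype.card V, ?_⟩
    rintro _ ⟨u, -, v, -, p, q, h, rfl⟩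
    exact h.nodup.length_le_card
  obtain ⟨u, hu, v, hv, p, q, h, hmax⟩ := Nat.sSup_mem hne hbdd
  have hlongest : ∀ n ∈ lengths, n ≤ (u :: p ++ v :: q).length := fun n hn =>
    hmax ▸ le_csSup hbdd hn
  have huA : ∀ w ∈ A, G.Adj u w → w ∈ u :: p ++ v :: q := by
    intro w hw huw
    by_contra hmem
    refine (hlongest _ ⟨w, hw, v, hv, _, _, h.cons huw.symm hmem, rfl⟩).not_gt ?_
    simp
  have hvB : ∀ w ∈ B, G.Adj v w → w ∈ u :: p ++ v :: q := by
    intro w hw hvw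
    by_contra hmem
    have hmem' : w ∉ v :: q ++ u :: p := mt List.perm_append_comm.mem_iff.1 hmem
    refine (hlongest _ ⟨u, hu, w, hw, _, _, (h.symm.cons hvw.symm hmem').symm, rfl⟩).not_gt ?_
    simp
  have hdegA := (hA u hu).trans (card_filter_adj_le_degOn huA)
  have hdegB := (hB v hv).trans (card_filter_adj_le_degOn hvB)
  have hlt := h.degOn_add_degOn_lt hconn hG
  omega

theorem exists_forall_minDegreeOn_card_le (hm : 0 < m) (hconn : G.Preconnected)
    (hG : (pathGraph (m + 1)).Free G) (hsat : Saturated G m) :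
    ∃ a, 2 * a + 1 ≤ m ∧ ∀ S, MinDegreeOn G (a + 1) S → #S ≤ m - a := by
  classical
  obtain ⟨t, ht, hmt⟩ : ∃ t, 2 * t + 1 ≤ m ∧ m ≤ 2 * t + 2 := ⟨(m - 1) / 2, by omega, by omega⟩
  by_cases! hcore : ∀ S, MinDegreeOn G (t + 1) S → #S ≤ m - t
  · exact ⟨t, ht, hcore⟩
  obtain ⟨S₀, hdeg₀, hS₀⟩ := hcore
  obtain ⟨H, hSH, hH⟩ := (Set.toFinite {S | MinDegreeOn G (t + 1) S}).exists_le_maximal hdeg₀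
  have hclique : G.IsClique H := fun u hu v hv huv =>
    adj_of_minDegreeOn hconn hG hsat hH.1 hH.1 (by omega) hu hv huv
  have hHm := card_le_of_isClique_of_free hG hclique
  have hS₀H := card_le_card hSH
  refine ⟨m - #H, by omega, ?_⟩
  by_contra! ⟨S, hdegS, hS⟩
  obtain ⟨u, huS, huH⟩ : ∃ u ∈ S, u ∉ H := exists_mem_notMem_of_card_lt_card (by omega)
  have hadj : ∀ v ∈ H, G.Adj u v := fun v hv =>
    adj_of_minDegreeOn hconn hG hsat hdegS (minDegreeOn_of_isClique hclique) (by omega) huS hv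
      (ne_of_mem_of_not_mem hv huH).symm
  have hinsert : MinDegreeOn G (t + 1) (insert u H) := hH.1.insert (by omega) hadj
  exact huH (hH.2 hinsert (subset_insert u H) (mem_insert_self u H))

end MinDegree

end Paths

section EdgesOn

variable {V : Type*} {G : SimpleGraph V} [DecidableRel G.Adj]

/-- The edges of `G` with both ends in `S`. -/
def edgesOn (G : SimpleGraph V) [DecidableRel G.Adj] (S : Finset V) : Finset (Sym2 V) :=
  {e ∈ S.sym2 | e ∈ G.edgeSet}

theorem edgesOn_univ [Fintype V] : edgesOn G univ = G.edgeFinset := by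
  ext e
  simp [edgesOn]

theorem card_edgesOn_insert_le [DecidableEq V] (x : V) (S : Finset V) :
    #(edgesOn G (insert x S)) ≤ #{y ∈ insert x S | G.Adj x y} + #(edgesOn G S) := by
  rw [edgesOn, sym2_insert, filter_union, filter_image]
  exact (card_union_le _ _).trans (Nat.add_le_add_right card_image_le _)

theorem card_edgesOn_le_choose_two (S : Finset V) : #(edgesOn G S) ≤ (#S).choose 2 := by
  classical
  induction S using Finset.induction_on with
  | empty => simp [edgesOn]
  | insert x S hx ih =>
    have hdeg : #{y ∈ insert x S | G.Adj x y} ≤ #S := by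
      rw [filter_insert, if_neg (G.irrefl)]
      exact card_filter_le _ _
    have hins := card_edgesOn_insert_le (G := G) x S
    rw [card_insert_of_notMem hx, Nat.choose_succ_succ' _ 1, Nat.choose_one_right]
    lia

theorem card_edgesOn_le_of_forall_minDegreeOn {a q : ℕ}
    (h : ∀ S, MinDegreeOn G (a + 1) S → #S ≤ q) (S : Finset V) :
    #(edgesOn G S) ≤ q.choose 2 + a * (#S - q) := by
  classical
  induction S using Finset.strongInduction with
  | H S ih =>
    rcases le_or_gt #S q with hS | hS
    · exact (card_edgesOn_le_choose_two S).trans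
        ((Nat.choose_le_choose 2 hS).trans (Nat.le_add_right _ _))
    · obtain ⟨x, hx, hxa⟩ : ∃ x ∈ S, #{y ∈ S | G.Adj x y} ≤ a := by
        by_contra! hdeg
        exact (h S hdeg).not_gt hS
      have hins := card_edgesOn_insert_le (G := G) x (S.erase x)
      rw [insert_erase hx] at hins
      have hcard := card_erase_of_mem hx
      calc #(edgesOn G S) ≤ a + (q.choose 2 + a * (#(S.erase x) - q)) := by
            linarith [ih _ (erase_ssubset hx)]
        _ = q.choose 2 + a * (#(S.erase x) - q + 1) := by ring
        _ = q.choose 2 + a * (#S - q) := by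
            congr 2
            omega

end EdgesOn

theorem exists_card_edgeFinset_le_hFun {V : Type*} [Fintype V] {G : SimpleGraph V}
    [DecidableRel G.Adj] {m : ℕ} (hm : 0 < m) (hmV : m ≤ Fintype.card V) (hconn : G.Preconnected)
    (hG : (pathGraph (m + 1)).Free G) :
    ∃ a, 2 * a + 1 ≤ m ∧ #G.edgeFinset ≤ hFun (Fintype.card V) m a := by
  classical
  obtain ⟨H, hGH, hH⟩ :=
    (Set.toFinite {H : SimpleGraph V | (pathGraph (m + 1)).Free H}).exists_le_maximal hG
  obtain ⟨a, ha, hdeg⟩ := exists_forall_minDegreeOn_card_le hm (hconn.mono hGH) hH.1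
    (saturated_of_maximal hH)
  refine ⟨a, ha, (card_le_card (edgeFinset_mono hGH)).trans ?_⟩
  have hle := card_edgesOn_le_of_forall_minDegreeOn hdeg univ
  rwa [edgesOn_univ, card_univ, show Fintype.card V - (m - a) = Fintype.card V - m + a by omega]
    at hle

section DisjointSum

variable {V W X : Type*}

theorem card_edgeFinset_sum {G : SimpleGraph V} {H : SimpleGraph W} [Fintype G.edgeSet]
    [Fintype H.edgeSet] [Fintype (G ⊕g H).edgeSet] :
    #(G ⊕g H).edgeFinset = #G.edgeFinset + #H.edgeFinset := by
  simp only [edgeFinset_card, Fintype.card_congr edgeSetSumEquiv, Fintype.card_sum]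

/-- A graph is the disjoint sum of its restrictions to `s` and `sᶜ` if no edge joins the two. -/
def isoSumInduceCompl (G : SimpleGraph V) (s : Set V) [DecidablePred (· ∈ s)]
    (hs : ∀ ⦃x y⦄, G.Adj x y → (x ∈ s ↔ y ∈ s)) : G.induce s ⊕g G.induce sᶜ ≃g G where
  toEquiv := Equiv.Set.sumCompl s
  map_rel_iff' := by
    rintro (⟨x, hx⟩ | ⟨x, hx⟩) (⟨y, hy⟩ | ⟨y, hy⟩)
    · simp
    · simpa using fun h => hy ((hs h).1 hx)
    · simpa using fun h => hx ((hs h).2 hy)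
    · simp

theorem isContained_left_of_copy_sum {G : SimpleGraph V} {G' : SimpleGraph W} {H : SimpleGraph X}
    (hH : H.Preconnected) (f : Copy H (G ⊕g G')) {x : X} {v : V} (hfx : f x = .inl v) : H ⊑ G := by
  have hleft : ∀ y, ∃ v', f y = .inl v' := fun y => by
    have hreach : (G ⊕g G').Reachable (f x) (f y) := (hH x y).map f.toHom
    rcases hfy : f y with v' | w'
    · exact ⟨v', rfl⟩
    · rw [hfx, hfy] at hreach
      exact absurd hreach (not_reachable_sum_inl_inr v w')
  choose g hg using hleft
  have hadj : ∀ {y z}, H.Adj y z → G.Adj (g y) (g z) := fun {y z} hyz => by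
    have h : (G ⊕g G').Adj (f y) (f z) := f.toHom.map_adj hyz
    rwa [hg, hg, sum_adj_inl] at h
  have hinj : Function.Injective g := fun y z hyz =>
    f.injective ((hg y).trans ((congrArg Sum.inl hyz).trans (hg z).symm))
  exact ⟨⟨⟨g, hadj⟩, hinj⟩⟩

theorem free_sum {G : SimpleGraph V} {G' : SimpleGraph W} {H : SimpleGraph X}
    (hH : H.Preconnected) (hG : H.Free G) (hG' : H.Free G') : H.Free (G ⊕g G') := by
  rintro ⟨f⟩
  rcases isEmpty_or_nonempty X with hX | ⟨⟨x⟩⟩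
  · exact hG .of_isEmpty
  rcases hfx : f x with v | w
  · exact hG (isContained_left_of_copy_sum hH f hfx)
  · exact hG' (isContained_left_of_copy_sum hH (Iso.sumComm.toCopy.comp f) (x := x) (v := w)
      (congrArg Sum.swap hfx))

end DisjointSum

section ExtremalNumber

variable {X : Type*} {H : SimpleGraph X}

theorem exists_card_edgeFinset_le_of_not_preconnected {V : Type*} [Fintype V] {G : SimpleGraph V}
    [DecidableRel G.Adj] (hG : ¬ G.Preconnected) (hfree : H.Free G) :
    ∃ a b, 0 < a ∧ 0 < b ∧ a + b = Fintype.card V ∧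
      #G.edgeFinset ≤ extremalNumber a H + extremalNumber b H := by
  classical
  simp only [Preconnected, not_forall] at hG
  obtain ⟨u, v, huv⟩ := hG
  let s : Set V := {x | G.Reachable u x}
  have hs : ∀ ⦃x y⦄, G.Adj x y → (x ∈ s ↔ y ∈ s) := fun x y hxy =>
    ⟨fun hx => hx.trans hxy.reachable, fun hy => hy.trans hxy.symm.reachable⟩
  have hinduce : ∀ t : Set V, H.Free (G.induce t) := fun t h =>
    hfree (h.trans ⟨Copy.induce G t⟩)
  refine ⟨Fintype.card s, Fintype.card ↥sᶜ, Fintype.card_pos_iff.2 ⟨u, Reachable.refl u⟩,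
    Fintype.card_pos_iff.2 ⟨v, huv⟩, ?_, ?_⟩
  · rw [← Fintype.card_sum, Fintype.card_congr (Equiv.Set.sumCompl s)]
  · rw [← (isoSumInduceCompl G s hs).card_edgeFinset_eq, card_edgeFinset_sum]
    exact add_le_add (card_edgeFinset_le_extremalNumber (hinduce s))
      (card_edgeFinset_le_extremalNumber (hinduce sᶜ))

theorem extremalNumber_le_of_forall_preconnected {f : ℕ → ℕ}
    (hf : ∀ a b, f a + f b ≤ f (a + b))
    (hbound : ∀ n (G : SimpleGraph (Fin n)) [DecidableRel G.Adj], G.Preconnected → H.Free G →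
      #G.edgeFinset ≤ f n) (n : ℕ) : extremalNumber n H ≤ f n := by
  induction n using Nat.strong_induction_on with
  | _ n ih =>
    rw [← Fintype.card_fin n, extremalNumber_le_iff, Fintype.card_fin]
    intro G _ hfree
    by_cases hG : G.Preconnected
    · exact hbound n G hG hfree
    · obtain ⟨a, b, ha, hb, hab, hle⟩ := exists_card_edgeFinset_le_of_not_preconnected hG hfree
      rw [Fintype.card_fin] at hab
      calc #G.edgeFinset ≤ extremalNumber a H + extremalNumber b H := hle
        _ ≤ f a + f b := add_le_add (ih a (by omega)) (ih b (by omega))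
        _ ≤ f n := hab ▸ hf a b

theorem extremalNumber_add_le (hH : H.Preconnected) (hH' : H ≠ ⊥) (a b : ℕ) :
    extremalNumber a H + extremalNumber b H ≤ extremalNumber (a + b) H := by
  classical
  obtain ⟨G, _, hG⟩ := exists_isExtremal_free (V := Fin a) hH'
  obtain ⟨G', _, hG'⟩ := exists_isExtremal_free (V := Fin b) hH'
  have hle := card_edgeFinset_le_extremalNumber (free_sum hH hG.prop hG'.prop)
  rwa [card_edgeFinset_sum, card_edgeFinset_of_isExtremal_free hG,
    card_edgeFinset_of_isExtremal_free hG', Fintype.card_sum, Fintype.card_fin,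
    Fintype.card_fin] at hle

theorem choose_two_le_extremalNumber [Fintype X] {n : ℕ} (hn : n < Fintype.card X) :
    n.choose 2 ≤ extremalNumber n H := by
  have hfree : H.Free (⊤ : SimpleGraph (Fin n)) := fun ⟨f⟩ =>
    (Fintype.card_le_of_injective f f.injective).not_gt (by simpa using hn)
  have hle := card_edgeFinset_le_extremalNumber hfree
  rwa [card_edgeFinset_top_eq_card_choose_two, Fintype.card_fin] at hle

end ExtremalNumber

theorem extremalNumber_pathGraph_le {m : ℕ} (hm : 0 < m) (n : ℕ) :
    extremalNumber n (pathGraph (m + 1)) ≤ cliqueUnionEdges m n := by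
  refine extremalNumber_le_of_forall_preconnected (cliqueUnionEdges_add_le hm)
    (fun n G _ hconn hG => ?_) n
  rcases lt_or_ge n m with hn | hn
  · rw [cliqueUnionEdges_of_lt hn]
    simpa using G.card_edgeFinset_le_card_choose_two
  · obtain ⟨a, ha, hle⟩ := exists_card_edgeFinset_le_hFun hm (by simpa using hn) hconn hG
    rw [Fintype.card_fin] at hle
    exact hle.trans (hFun_le_cliqueUnionEdges ha hn)

theorem pathGraph_ne_bot {m : ℕ} (hm : 0 < m) : pathGraph (m + 1) ≠ ⊥ :=
  ne_bot_iff_exists_adj.2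
    ⟨⟨0, by omega⟩, ⟨1, by omega⟩, pathGraph_adj.2 (.inl rfl)⟩

theorem le_extremalNumber_pathGraph {m : ℕ} (hm : 0 < m) (n : ℕ) :
    cliqueUnionEdges m n ≤ extremalNumber n (pathGraph (m + 1)) := by
  induction n using Nat.strong_induction_on with
  | _ n ih =>
    rcases lt_or_ge n m with hn | hn
    · rw [cliqueUnionEdges_of_lt hn]
      exact choose_two_le_extremalNumber (by simpa using by omega)
    · obtain ⟨j, rfl⟩ := Nat.exists_eq_add_of_le hn
      calc cliqueUnionEdges m (m + j) = m.choose 2 + cliqueUnionEdges m j :=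
            cliqueUnionEdges_add_left hm j
        _ ≤ extremalNumber m (pathGraph (m + 1)) + extremalNumber j (pathGraph (m + 1)) :=
            add_le_add (choose_two_le_extremalNumber (by simp)) (ih j (by omega))
        _ ≤ extremalNumber (m + j) (pathGraph (m + 1)) :=
            extremalNumber_add_le (pathGraph_preconnected _) (pathGraph_ne_bot hm) m j

theorem extremalNumber_pathGraph {m : ℕ} (hm : 0 < m) (n : ℕ) :
    extremalNumber n (pathGraph (m + 1)) = cliqueUnionEdges m n :=
  (extremalNumber_pathGraph_le hm n).antisymm (le_extremalNumber_pathGraph hm n)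

theorem containsCopy_iff_isContained {V W : Type*} {G : SimpleGraph V} {H : SimpleGraph W} :
    ContainsCopy G H ↔ H ⊑ G :=
  ⟨fun ⟨f, hf, hadj⟩ => ⟨⟨⟨f, hadj _ _⟩, hf⟩⟩,
    fun ⟨f⟩ => ⟨f, f.injective, fun _ _ => f.toHom.map_adj⟩⟩

theorem edgeCount_eq_card_edgeFinset {V : Type*} (G : SimpleGraph V) [Fintype G.edgeSet] :
    edgeCount G = #G.edgeFinset := by
  rw [edgeCount, Set.ncard_eq_toFinset_card', edgeFinset]

theorem exNum_eq_extremalNumber (n : ℕ) {W : Type*} {H : SimpleGraph W} (hH : H ≠ ⊥) :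
    exNum n H = extremalNumber n H := by
  classical
  obtain ⟨G, _, hG⟩ := exists_isExtremal_free (V := Fin n) hH
  refine IsGreatest.csSup_eq ⟨⟨G, mt containsCopy_iff_isContained.1 hG.prop, ?_⟩, ?_⟩
  · rw [edgeCount_eq_card_edgeFinset, card_edgeFinset_of_isExtremal_free hG, Fintype.card_fin]
  · rintro _ ⟨G', hG', rfl⟩
    rw [edgeCount_eq_card_edgeFinset]
    simpa using card_edgeFinset_le_extremalNumber (mt containsCopy_iff_isContained.2 hG')

end PathTuran

/-- Faudree–Schelp; Kopylov. Let `k ≥ 3` and write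
`n = s(k-1) + r` with `0 ≤ r ≤ k-2`. Then `ex(n, P_k) = s·C(k-1,2) + C(r,2)`. -/
theorem turan_path (k n s r : ℕ) (hk : 3 ≤ k) (hn : n = s * (k - 1) + r)
    (hr : r ≤ k - 2) :
    exNum n (pathGraph k) = s * ((k - 1).choose 2) + r.choose 2 := by
  obtain ⟨m, rfl⟩ : ∃ m, k = m + 1 := ⟨k - 1, by omega⟩
  have hm : 0 < m := by omega
  have hrm : r < m := by omega
  rw [Nat.add_sub_cancel] at hn ⊢
  rw [PathTuran.exNum_eq_extremalNumber n (PathTuran.pathGraph_ne_bot hm),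
    PathTuran.extremalNumber_pathGraph hm, hn, PathTuran.cliqueUnionEdges_mul_add hm,
    PathTuran.cliqueUnionEdges_of_lt hrm]
end

section
/- Let k1 ≥ 2, k2 ≥ 1 with k1 ≥ k2, and set k = k1 + k2 + 1. Then for every vertex v of H_k(1), the graph H_k(1) − v contains P_{2k1+1} ∪ P_{2k2+1} as a subgraph; and for every vertex v of H_k(M_2), the graph H_k(M_2) − v contains P_{2k1+1} ∪ P_{2k2+1} as a subgraph. -/
open SimpleGraph

open SimpleGraph

/-- Membership (as 0-indexed natural) in the set `C` of `H_k(s)`: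
`C = {x_{s+1}, x_{s+3}, …, x_{2k-s+1}}` (1-indexed). -/
def inC_HkS (k s i : ℕ) : Prop := s ≤ i ∧ i ≤ 2 * k - s ∧ (i - s) % 2 = 0

/-- Membership in the set `D` of `H_k(s)`: `D = {x_{s+2}, …, x_{2k-s}}` (1-indexed). -/
def inD_HkS (k s i : ℕ) : Prop := s ≤ i ∧ i ≤ 2 * k - s ∧ (i - s) % 2 = 1

/-- The graph `H_k(s)`: the path `x_1 … x_{2k+1}` (here 0-indexed on `Fin (2k+1)`),
plus all edges inside `A = {x_1,…,x_s}`, all edges inside `B = {x_{2k-s+2},…,x_{2k+1}}`,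
and all edges between `A ∪ B` and `C = {x_{s+1}, x_{s+3}, …, x_{2k-s+1}}`. -/
def HkS (k s : ℕ) : SimpleGraph (Fin (2 * k + 1)) :=
  SimpleGraph.fromRel (fun x y =>
    ((y : ℕ) = (x : ℕ) + 1) ∨
    ((x : ℕ) < s ∧ (y : ℕ) < s) ∨
    (2 * k - s + 1 ≤ (x : ℕ) ∧ 2 * k - s + 1 ≤ (y : ℕ)) ∨
    (((x : ℕ) < s ∨ 2 * k - s + 1 ≤ (x : ℕ)) ∧ inC_HkS k s (y : ℕ)))

/-- Membership in the part `C` (of size `k-1`) of `H_k(M_2)` (0-indexed):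
`C = {x_3, x_5, …, x_{2k-1}}` (1-indexed). -/
def inC_HkM2 (k i : ℕ) : Prop := 2 ≤ i ∧ i ≤ 2 * k - 2 ∧ i % 2 = 0

/-- Membership in `D` of `H_k(M_2)` (0-indexed): `D = {x_4, x_6, …, x_{2k-2}}` (1-indexed). -/
def inD_HkM2 (k i : ℕ) : Prop := 3 ≤ i ∧ i ≤ 2 * k - 3 ∧ i % 2 = 1

/-- The graph `H_k(M_2)`: the complete bipartite graph with parts
`C = {x_3,x_5,…,x_{2k-1}}` (size `k-1`) and `A ∪ B ∪ D` (size `k+2`), where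
`A = {x_1,x_2}`, `B = {x_{2k},x_{2k+1}}`, `D = {x_4,…,x_{2k-2}}`, together with the
matching edges `x_1x_2` and `x_{2k}x_{2k+1}` (here 0-indexed on `Fin (2k+1)`). -/
def HkM2 (k : ℕ) : SimpleGraph (Fin (2 * k + 1)) :=
  SimpleGraph.fromRel (fun x y =>
    ((x : ℕ) = 0 ∧ (y : ℕ) = 1) ∨
    ((x : ℕ) = 2 * k - 1 ∧ (y : ℕ) = 2 * k) ∨
    (inC_HkM2 k (x : ℕ) ∧ ¬ inC_HkM2 k (y : ℕ)))

/-- Membership in the part `B = {b_1, …, b_{k-1}}` of `H_k(P_3)`; on `Fin (2k+1)` we take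
`a_1 = 0, a_2 = 1, a_3 = 2`, `B = {3, …, k+1}`, `C = {k+2, …, 2k}`. -/
def inB_HkP3 (k i : ℕ) : Prop := 3 ≤ i ∧ i ≤ k + 1

/-- Membership in the set `C = {c_1, …, c_{k-1}}` of `H_k(P_3)`. -/
def inC_HkP3 (k i : ℕ) : Prop := k + 2 ≤ i ∧ i ≤ 2 * k

/-- The graph `H_k(P_3)`: the complete bipartite graph `K_{k-1,k+2}` with parts
`B = {b_1,…,b_{k-1}}` and `A ∪ C` where `A = {a_1,a_2,a_3}`, `C = {c_1,…,c_{k-1}}`,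
plus the edges `a_1a_2` and `a_2a_3`. Here `a_1 = 0, a_2 = 1, a_3 = 2`,
`B = {3,…,k+1}`, `C = {k+2,…,2k}` on `Fin (2k+1)`. -/
def HkP3 (k : ℕ) : SimpleGraph (Fin (2 * k + 1)) :=
  SimpleGraph.fromRel (fun x y =>
    ((x : ℕ) = 0 ∧ (y : ℕ) = 1) ∨
    ((x : ℕ) = 1 ∧ (y : ℕ) = 2) ∨
    (inB_HkP3 k (x : ℕ) ∧ ¬ inB_HkP3 k (y : ℕ)))

/-- The graph `F_k(t)`: the path `x_1 … x_{2k+t}` (0-indexed on `Fin (2k+t)`), plus all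
edges inside `A = {x_1,…,x_k}`, all edges inside `B = {x_{k+t+1},…,x_{2k+t}}`, all edges
between `x_k` and `B`, and all edges between `x_{k+t+1}` and `A`. -/
def FkT (k t : ℕ) : SimpleGraph (Fin (2 * k + t)) :=
  SimpleGraph.fromRel (fun x y =>
    ((y : ℕ) = (x : ℕ) + 1) ∨
    ((x : ℕ) < k ∧ (y : ℕ) < k) ∨
    (k + t ≤ (x : ℕ) ∧ k + t ≤ (y : ℕ)) ∨
    ((x : ℕ) = k - 1 ∧ k + t ≤ (y : ℕ)) ∨
    ((x : ℕ) = k + t ∧ (y : ℕ) < k))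

/-- The graph `H(n,k,a)`: vertices `{0,…,k-2a-1} = A`, `{k-2a,…,k-a-1} = B`,
`{k-a,…,n-1} = C`; all edges inside `A ∪ B` and all edges between `B` and `C`. -/
def Hgraph (n k a : ℕ) : SimpleGraph (Fin n) :=
  SimpleGraph.fromRel (fun x y =>
    ((x : ℕ) < k - a ∧ (y : ℕ) < k - a) ∨
    (k - 2 * a ≤ (x : ℕ) ∧ (x : ℕ) < k - a ∧ k - a ≤ (y : ℕ)))

/-- The graph `Z(n,k,t)` (for `n = (k-t-2) + ℓ(t-1) + 2`): two universal mutually adjacent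
vertices `0, 1`, a clique `K_{k-t-2}` on `{2,…,k-t-1}`, and consecutive blocks of size
`t-1` on the remaining vertices, each forming a clique `K_{t-1}`. -/
def Zgraph (n k t : ℕ) : SimpleGraph (Fin n) :=
  SimpleGraph.fromRel (fun x y =>
    ((x : ℕ) < 2) ∨ ((y : ℕ) < 2) ∨
    (2 ≤ (x : ℕ) ∧ (x : ℕ) < k - t ∧ 2 ≤ (y : ℕ) ∧ (y : ℕ) < k - t) ∨
    (k - t ≤ (x : ℕ) ∧ k - t ≤ (y : ℕ) ∧
      ((x : ℕ) - (k - t)) / (t - 1) = ((y : ℕ) - (k - t)) / (t - 1)))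

/-!
Write `k = k₁ + k₂ + 1`. In `H_k(1)` the last `2 k₂ + 2` vertices span a cycle, closed by the
edge from `x_{2k+1}` to `x_{2k₁+2}`, and the first `2 k₁ + 1` vertices span a path. A cycle
minus a vertex is a path, which settles the deletion of a vertex of that cycle. Every other
vertex lies on the cycle spanned by the first `2 k₁ + 2` vertices, whose complement is a path
on `2 k₂ + 1` vertices.

In `H_k(M_2)` the vertices of `C` are twins, so it suffices to delete `x_{2k-1}`, which leaves
the paths `x_1 … x_{2k₁-1} x_{2k} x_{2k+1}` and `x_{2k₁} … x_{2k-2}`. Once the matching is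
discarded, the vertices outside `C` are twins as well, so it suffices to delete `x_{2k+1}`,
which leaves the paths `x_2 … x_{2k₁+2}` and `x_1 x_{2k₁+3} … x_{2k}`.
-/

section ContainsCopy

variable {V W X : Type*} {G G' : SimpleGraph V} {H : SimpleGraph W} {K : SimpleGraph X}

theorem ContainsCopy.mono (hG : G ≤ G') : ContainsCopy G H → ContainsCopy G' H
  | ⟨f, hf, hadj⟩ => ⟨f, hf, fun a b hab => hG (hadj a b hab)⟩

theorem ContainsCopy.sum_comm (h : ContainsCopy G (H ⊕g K)) : ContainsCopy G (K ⊕g H) :=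
  let ⟨f, hf, hadj⟩ := h
  ⟨f ∘ Sum.swap, hf.comp (Equiv.sumComm X W).injective,
    fun _ _ hab => hadj _ _ (Iso.sumComm.map_adj_iff.2 hab)⟩

theorem containsCopy_induce_of_le_comap {s : Set V} {f : W → V} (hf : f.Injective)
    (hs : ∀ w, f w ∈ s) (hle : H ≤ G.comap f) : ContainsCopy (G.induce s) H :=
  ⟨fun w => ⟨f w, hs w⟩, fun _ _ h => hf (congrArg Subtype.val h), fun _ _ h => hle h⟩

theorem sum_le_comap {f : W → V} {g : X → V} (hf : H ≤ G.comap f) (hg : K ≤ G.comap g) :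
    H ⊕g K ≤ G.comap (Sum.elim f g) := by
  rintro (a | a) (b | b) hab
  · exact hf (sum_adj_inl.1 hab)
  · simp at hab
  · simp at hab
  · exact hg (sum_adj_inr.1 hab)

theorem le_comap_swap_of_twins [DecidableEq V] {v w : V} (hvw : ∀ x, G.Adj v x ↔ G.Adj w x) :
    G ≤ G.comap (Equiv.swap v w) := by
  intro a b hab
  have hswap : ∀ x y, G.Adj (Equiv.swap v w x) y ↔ G.Adj x y := by
    intro x y
    rcases eq_or_ne x v with rfl | hxv
    · rw [Equiv.swap_apply_left, hvw]
    rcases eq_or_ne x w with rfl | hxw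
    · rw [Equiv.swap_apply_right, hvw]
    rw [Equiv.swap_apply_of_ne_of_ne hxv hxw]
  rw [comap_adj, hswap, adj_comm, hswap]
  exact hab.symm

theorem ContainsCopy.delete_twin {v w : V} (hvw : ∀ x, G.Adj v x ↔ G.Adj w x)
    (h : ContainsCopy (G.induce {u | u ≠ w}) H) : ContainsCopy (G.induce {u | u ≠ v}) H := by
  classical
  obtain ⟨f, hf, hadj⟩ := h
  refine containsCopy_induce_of_le_comap (f := fun x => Equiv.swap v w (f x))
    ((Equiv.swap v w).injective.comp (Subtype.val_injective.comp hf)) (fun x hx => (f x).2 ?_)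
    fun a b hab => le_comap_swap_of_twins hvw (hadj a b hab)
  rwa [Equiv.swap_apply_eq_iff, Equiv.swap_apply_left] at hx

end ContainsCopy

section PathCycle

variable {n : ℕ}

theorem pathGraph_le {G : SimpleGraph (Fin n)}
    (h : ∀ i j : Fin n, (i : ℕ) + 1 = j → G.Adj i j) : pathGraph n ≤ G := by
  intro i j hij
  rcases pathGraph_adj.1 hij with hij | hji
  · exact h i j hij
  · exact (h j i hji).symm

theorem cycleGraph_adj_iff_eq_add_one {i j : Fin (n + 1)} :
    (cycleGraph (n + 1)).Adj i j ↔ i ≠ j ∧ (j = i + 1 ∨ i = j + 1) := by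
  rw [cycleGraph_eq_circulantGraph]
  simp only [circulantGraph, fromRel_adj, Set.mem_singleton_iff, sub_eq_iff_eq_add', or_comm]

theorem cycleGraph_le {G : SimpleGraph (Fin (n + 1))}
    (hsucc : ∀ i j : Fin (n + 1), (i : ℕ) + 1 = j → G.Adj i j) (hlast : G.Adj (Fin.last n) 0) :
    cycleGraph (n + 1) ≤ G := by
  have hadd : ∀ i : Fin (n + 1), G.Adj i (i + 1) := by
    intro i
    induction i using Fin.lastCases with
    | last => simpa using hlast
    | cast i => exact hsucc _ _ (by simp)
  intro i j hij
  rcases (cycleGraph_adj_iff_eq_add_one.1 hij).2 with rfl | rfl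
  · exact hadd i
  · exact (hadd j).symm

theorem pathGraph_le_comap_cycleGraph (c : Fin (n + 1)) :
    pathGraph n ≤ (cycleGraph (n + 1)).comap fun i => c + i.succ := by
  refine pathGraph_le fun i j hij => ?_
  have hsucc : j.succ = i.succ + 1 := by
    rw [← Fin.coeSucc_eq_succ, show j.castSucc = i.succ from Fin.ext hij.symm]
  rw [comap_adj, cycleGraph_adj_iff_eq_add_one]
  refine ⟨fun h => ?_, .inl ?_⟩
  · have := Fin.succ_injective _ (add_left_cancel h)
    omega
  · rw [hsucc, add_assoc]

theorem containsCopy_delete_vertex_of_cycleGraph_sum {V W : Type*} {G : SimpleGraph V}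
    {H : SimpleGraph W} {f : Fin (n + 1) → V} {g : W → V}
    (hfg : (Sum.elim f g).Injective) (hf : cycleGraph (n + 1) ≤ G.comap f) (hg : H ≤ G.comap g)
    (c : Fin (n + 1)) : ContainsCopy (G.induce {u | u ≠ f c}) (pathGraph n ⊕g H) := by
  have hshift : Function.Injective fun i : Fin n => c + i.succ :=
    (add_right_injective c).comp (Fin.succ_injective n)
  rw [Sum.elim_injective] at hfg
  obtain ⟨hf_inj, hg_inj, hdisj⟩ := hfg
  refine containsCopy_induce_of_le_comap (f := Sum.elim (fun i => f (c + i.succ)) g)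
    ((hf_inj.comp hshift).sumElim hg_inj fun i w => hdisj (c + i.succ) w) ?_
    (sum_le_comap (fun _ _ h => hf (pathGraph_le_comap_cycleGraph c h)) hg)
  rintro (i | w) h
  · exact Fin.succ_ne_zero i (by simpa using hf_inj h)
  · exact hdisj c w h.symm

end PathCycle

section HkSOne

variable {k : ℕ} {x y : Fin (2 * k + 1)}

theorem HkS_adj_of_val_add_one_eq {s : ℕ} (h : (x : ℕ) + 1 = y) : (HkS k s).Adj x y := by
  rw [HkS, fromRel_adj]
  exact ⟨by omega, .inl (.inl h.symm)⟩

theorem HkS_one_adj_of_odd (hx : (x : ℕ) = 0 ∨ (x : ℕ) = 2 * k) (hy : (y : ℕ) % 2 = 1) :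
    (HkS k 1).Adj x y := by
  rw [HkS, fromRel_adj]
  refine ⟨by omega, .inl (.inr (.inr (.inr ⟨by omega, ?_, ?_, ?_⟩)))⟩ <;> omega

variable {k₁ k₂ : ℕ} {v : Fin (2 * (k₁ + k₂ + 1) + 1)}

theorem HkS_one_delete_vertex_of_lt (hv : (v : ℕ) < 2 * k₁ + 2) :
    ContainsCopy ((HkS (k₁ + k₂ + 1) 1).induce {u | u ≠ v})
      (pathGraph (2 * k₁ + 1) ⊕g pathGraph (2 * k₂ + 1)) := by
  let f (i : Fin (2 * k₁ + 1 + 1)) : Fin (2 * (k₁ + k₂ + 1) + 1) := ⟨i, by omega⟩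
  let g (j : Fin (2 * k₂ + 1)) : Fin (2 * (k₁ + k₂ + 1) + 1) := ⟨2 * k₁ + 2 + j, by omega⟩
  refine containsCopy_delete_vertex_of_cycleGraph_sum (f := f) (g := g) ?_ ?_ ?_ ⟨v, hv⟩
  · intro i j h
    grind [Fin.ext_iff]
  · exact cycleGraph_le (fun i j hij => HkS_adj_of_val_add_one_eq hij)
      (HkS_one_adj_of_odd (.inl rfl) (by simp only [f, Fin.val_last]; omega)).symm
  · exact pathGraph_le fun i j hij => HkS_adj_of_val_add_one_eq (by simp only [g]; omega)

theorem HkS_one_delete_vertex_of_ge (hv : 2 * k₁ + 1 ≤ (v : ℕ)) :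
    ContainsCopy ((HkS (k₁ + k₂ + 1) 1).induce {u | u ≠ v})
      (pathGraph (2 * k₁ + 1) ⊕g pathGraph (2 * k₂ + 1)) := by
  let f (i : Fin (2 * k₂ + 1 + 1)) : Fin (2 * (k₁ + k₂ + 1) + 1) := ⟨2 * k₁ + 1 + i, by omega⟩
  let g (j : Fin (2 * k₁ + 1)) : Fin (2 * (k₁ + k₂ + 1) + 1) := ⟨j, by omega⟩
  have hfv : f ⟨v - (2 * k₁ + 1), by omega⟩ = v := Fin.ext (Nat.add_sub_of_le hv)
  rw [← hfv]
  refine (containsCopy_delete_vertex_of_cycleGraph_sum (f := f) (g := g) ?_ ?_ ?_ _).sum_comm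
  · intro i j h
    grind [Fin.ext_iff]
  · exact cycleGraph_le (fun i j hij => HkS_adj_of_val_add_one_eq (by simp only [f]; omega))
      (HkS_one_adj_of_odd (.inr (by simp only [f, Fin.val_last]; omega))
        (by simp only [f, Fin.val_zero]; omega))
  · exact pathGraph_le fun i j hij => HkS_adj_of_val_add_one_eq hij

theorem HkS_one_delete_vertex (v : Fin (2 * (k₁ + k₂ + 1) + 1)) :
    ContainsCopy ((HkS (k₁ + k₂ + 1) 1).induce {u | u ≠ v})
      (pathGraph (2 * k₁ + 1) ⊕g pathGraph (2 * k₂ + 1)) :=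
  (lt_or_ge (v : ℕ) (2 * k₁ + 2)).elim HkS_one_delete_vertex_of_lt
    fun hv => HkS_one_delete_vertex_of_ge (by omega)

end HkSOne

section HkM2

variable {k : ℕ} {x y : Fin (2 * k + 1)}

/-- The complete bipartite graph `K_{k-1,k+2}` with parts `C` and `A ∪ B ∪ D` from which `H_k(M_2)`
arises by adding the matching. It is encoded as the pullback of the one-edge graph on the two truth
values along membership in `C`. -/
def HkM2Bipartite (k : ℕ) : SimpleGraph (Fin (2 * k + 1)) :=
  (⊤ : SimpleGraph Prop).comap fun x => inC_HkM2 k x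

theorem HkM2_adj_iff_of_mem (hx : inC_HkM2 k x) : (HkM2 k).Adj x y ↔ ¬ inC_HkM2 k y := by
  simp only [HkM2, fromRel_adj, inC_HkM2] at hx ⊢
  grind

theorem HkM2Bipartite_adj :
    (HkM2Bipartite k).Adj x y ↔ ¬(inC_HkM2 k x ↔ inC_HkM2 k y) := by
  simp [HkM2Bipartite]

theorem HkM2Bipartite_le_HkM2 (k : ℕ) : HkM2Bipartite k ≤ HkM2 k := by
  intro x y hxy
  rw [HkM2Bipartite_adj] at hxy
  by_cases hx : inC_HkM2 k x
  · exact (HkM2_adj_iff_of_mem hx).2 (by tauto)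
  · exact ((HkM2_adj_iff_of_mem (by tauto)).2 hx).symm

theorem HkM2Bipartite_adj_of_val_add_one_eq (hx : 1 ≤ (x : ℕ)) (hy : (y : ℕ) < 2 * k)
    (h : (x : ℕ) + 1 = y) : (HkM2Bipartite k).Adj x y := by
  rw [HkM2Bipartite_adj, inC_HkM2, inC_HkM2]
  omega

theorem HkM2_adj_of_val_add_one_eq (h : (x : ℕ) + 1 = y) : (HkM2 k).Adj x y := by
  by_cases hmid : 1 ≤ (x : ℕ) ∧ (y : ℕ) < 2 * k
  · exact HkM2Bipartite_le_HkM2 k (HkM2Bipartite_adj_of_val_add_one_eq hmid.1 hmid.2 h)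
  · simp only [HkM2, fromRel_adj]
    exact ⟨by omega, by omega⟩

variable {k₁ k₂ : ℕ} {v : Fin (2 * (k₁ + k₂ + 1) + 1)}

theorem HkM2_delete_vertex_of_val_eq (hk₁ : 2 ≤ k₁) (hv : (v : ℕ) = 2 * (k₁ + k₂)) :
    ContainsCopy ((HkM2 (k₁ + k₂ + 1)).induce {u | u ≠ v})
      (pathGraph (2 * k₁ + 1) ⊕g pathGraph (2 * k₂ + 1)) := by
  let f (i : Fin (2 * k₁ + 1)) : Fin (2 * (k₁ + k₂ + 1) + 1) :=
    ⟨if (i : ℕ) ≤ 2 * k₁ - 2 then i else i + (2 * k₂ + 2), by split <;> omega⟩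
  let g (j : Fin (2 * k₂ + 1)) : Fin (2 * (k₁ + k₂ + 1) + 1) := ⟨2 * k₁ - 1 + j, by omega⟩
  refine containsCopy_induce_of_le_comap (f := Sum.elim f g) ?_ ?_ (sum_le_comap ?_ ?_)
  · intro i j h
    grind [Fin.ext_iff]
  · grind [Fin.ext_iff]
  · refine pathGraph_le fun i j hij => ?_
    rcases eq_or_ne (i : ℕ) (2 * k₁ - 2) with hi | hi
    · -- The step from `x_{2k₁-1}` in `C` to `x_{2k}` in `B`.
      refine (HkM2_adj_iff_of_mem ?_).2 ?_ <;> grind [inC_HkM2]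
    · exact HkM2_adj_of_val_add_one_eq (by grind)
  · exact pathGraph_le fun i j hij => HkM2_adj_of_val_add_one_eq (by simp only [g]; omega)

theorem HkM2_delete_vertex_of_mem (hk₁ : 2 ≤ k₁) (hv : inC_HkM2 (k₁ + k₂ + 1) v) :
    ContainsCopy ((HkM2 (k₁ + k₂ + 1)).induce {u | u ≠ v})
      (pathGraph (2 * k₁ + 1) ⊕g pathGraph (2 * k₂ + 1)) := by
  let w : Fin (2 * (k₁ + k₂ + 1) + 1) := ⟨2 * (k₁ + k₂), by omega⟩
  have hw : inC_HkM2 (k₁ + k₂ + 1) w := by rw [inC_HkM2]; grind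
  exact (HkM2_delete_vertex_of_val_eq hk₁ rfl).delete_twin
    fun x => (HkM2_adj_iff_of_mem hv).trans (HkM2_adj_iff_of_mem hw).symm

theorem HkM2Bipartite_delete_last (k₁ k₂ : ℕ) :
    ContainsCopy ((HkM2Bipartite (k₁ + k₂ + 1)).induce {u | u ≠ Fin.last _})
      (pathGraph (2 * k₁ + 1) ⊕g pathGraph (2 * k₂ + 1)) := by
  let f (i : Fin (2 * k₁ + 1)) : Fin (2 * (k₁ + k₂ + 1) + 1) := ⟨i + 1, by omega⟩
  let g (j : Fin (2 * k₂ + 1)) : Fin (2 * (k₁ + k₂ + 1) + 1) :=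
    ⟨if (j : ℕ) = 0 then 0 else 2 * k₁ + 1 + j, by split <;> omega⟩
  refine containsCopy_induce_of_le_comap (f := Sum.elim f g) ?_ ?_ (sum_le_comap ?_ ?_)
  · intro i j h
    grind [Fin.ext_iff]
  · grind [Fin.ext_iff]
  · exact pathGraph_le fun i j hij => HkM2Bipartite_adj_of_val_add_one_eq
      (by simp only [f]; omega) (by simp only [f]; omega) (by simp only [f]; omega)
  · refine pathGraph_le fun i j hij => ?_
    rw [comap_adj, HkM2Bipartite_adj]
    grind [inC_HkM2]

theorem HkM2_delete_vertex_of_notMem (hv : ¬ inC_HkM2 (k₁ + k₂ + 1) v) :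
    ContainsCopy ((HkM2 (k₁ + k₂ + 1)).induce {u | u ≠ v})
      (pathGraph (2 * k₁ + 1) ⊕g pathGraph (2 * k₂ + 1)) := by
  have hlast : ¬ inC_HkM2 (k₁ + k₂ + 1) (Fin.last (2 * (k₁ + k₂ + 1))) := by
    simp [inC_HkM2]
  refine ((HkM2Bipartite_delete_last k₁ k₂).delete_twin fun x => ?_).mono
    fun _ _ h => HkM2Bipartite_le_HkM2 _ h
  rw [HkM2Bipartite_adj, HkM2Bipartite_adj, iff_false_left hv, iff_false_left hlast]

theorem HkM2_delete_vertex (hk₁ : 2 ≤ k₁) (v : Fin (2 * (k₁ + k₂ + 1) + 1)) :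
    ContainsCopy ((HkM2 (k₁ + k₂ + 1)).induce {u | u ≠ v})
      (pathGraph (2 * k₁ + 1) ⊕g pathGraph (2 * k₂ + 1)) := by
  by_cases hv : inC_HkM2 (k₁ + k₂ + 1) v
  · exact HkM2_delete_vertex_of_mem hk₁ hv
  · exact HkM2_delete_vertex_of_notMem hv

end HkM2

/-- Let `k1 ≥ 2`, `k2 ≥ 1`, `k1 ≥ k2`, `k = k1 + k2 + 1`. Then
deleting any vertex of `H_k(1)` or of `H_k(M_2)` leaves a graph containing
`P_{2k1+1} ∪ P_{2k2+1}` as a subgraph. -/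
theorem HkS_one_and_HkM2_delete_vertex (k1 k2 : ℕ) (hk1 : 2 ≤ k1) (hk2 : 1 ≤ k2)
    (hk12 : k2 ≤ k1) :
    (∀ v : Fin (2 * (k1 + k2 + 1) + 1),
      ContainsCopy ((HkS (k1 + k2 + 1) 1).induce {u | u ≠ v})
        ((pathGraph (2 * k1 + 1)) ⊕g (pathGraph (2 * k2 + 1)))) ∧
    (∀ v : Fin (2 * (k1 + k2 + 1) + 1),
      ContainsCopy ((HkM2 (k1 + k2 + 1)).induce {u | u ≠ v})
        ((pathGraph (2 * k1 + 1)) ⊕g (pathGraph (2 * k2 + 1)))) := by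
  exact ⟨HkS_one_delete_vertex, HkM2_delete_vertex hk1⟩
end

section
/- Let k ≥ 4 and 1 ≤ s ≤ k−2. Then every edge of H_k(s) is contained in a cycle of length 2k in H_k(s); likewise, every edge of H_k(M_2) is contained in a cycle of length 2k in H_k(M_2). -/
open SimpleGraph

open SimpleGraph

/-!
In `H_k(s)`, deleting a vertex `p ∈ D` leaves a Hamiltonian graph: walk through `A`, along the path
up to `p - 1 ∈ C`, jump to `B`, walk through it, jump back to `p + 1 ∈ C` and follow the path to its
last vertex in `C`, which is adjacent to `A`. Two vertices of `A` (or two of `B`) have the same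
neighbours apart from each other, so exchanging them, and reversing the path, carries an edge of one
of these cycles to any edge inside or leaving `A ∪ B`; the remaining edges join consecutive vertices
of `C ∪ D`, and `D` has at least two vertices, so some `p` avoids the edge.

For `H_k(M_2)`, note that it contains `H_k(2)`; the edges outside `H_k(2)` join `D` to `C`, and any
two vertices of `C` have the same neighbours.
-/

/-- The pair `e` is an edge of some cycle of length `n` in `G`. -/
def LiesOnCycle {V : Type*} (G : SimpleGraph V) (n : ℕ) (e : Sym2 V) : Prop :=
  ∃ (v : V) (c : G.Walk v v), c.IsCycle ∧ c.length = n ∧ e ∈ c.edges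

/-- Twins: `u` and `v` have the same neighbours outside `{u, v}`. They may or may not be adjacent
to each other. -/
def AreTwins {V : Type*} (G : SimpleGraph V) (u v : V) : Prop :=
  ∀ w, w ≠ u → w ≠ v → (G.Adj u w ↔ G.Adj v w)

/-- The endomorphism of `G` exchanging two twins. -/
def AreTwins.swapHom {V : Type*} [DecidableEq V] {G : SimpleGraph V} {u v : V}
    (h : AreTwins G u v) : G →g G where
  toFun := Equiv.swap u v
  map_rel' {a b} hab := by
    have ha := h a
    have hb := h b
    have hne := hab.ne
    simp only [Equiv.swap_apply_def]
    split_ifs <;> subst_vars <;> simp_all [G.adj_comm]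

namespace LiesOnCycle

variable {V W : Type*} {G G' : SimpleGraph V} {H : SimpleGraph W} {n : ℕ} {e : Sym2 V}

theorem map (φ : G →g H) (hφ : Function.Injective φ) (h : LiesOnCycle G n e) :
    LiesOnCycle H n (e.map φ) := by
  obtain ⟨v, c, hc, hlen, he⟩ := h
  refine ⟨φ v, c.map φ, hc.map hφ, by rwa [Walk.length_map], ?_⟩
  rw [Walk.edges_map]
  exact List.mem_map_of_mem he

theorem mono (hG : G ≤ G') (h : LiesOnCycle G n e) : LiesOnCycle G' n e := by
  simpa using h.map (.ofLE hG) Function.injective_id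

theorem symm {x y : V} (h : LiesOnCycle G n s(x, y)) : LiesOnCycle G n s(y, x) :=
  Sym2.eq_swap ▸ h

theorem adj {x y : V} (h : LiesOnCycle G n s(x, y)) : G.Adj x y := by
  obtain ⟨_, c, -, -, he⟩ := h
  exact c.adj_of_mem_edges he

theorem replace_twin {x u v : V} (h : LiesOnCycle G n s(x, u)) (huv : AreTwins G u v)
    (hxv : x ≠ v) : LiesOnCycle G n s(x, v) := by
  classical
  simpa [AreTwins.swapHom, Equiv.swap_apply_of_ne_of_ne h.adj.ne hxv] using
    h.map huv.swapHom (Equiv.swap u v).injective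

theorem cycleGraph_add_one (i : Fin (n + 3)) :
    LiesOnCycle (cycleGraph (n + 3)) (n + 3) s(i, i + 1) := by
  refine ⟨0, cycleGraph.cycle n, cycleGraph.isCycle_cycle, cycleGraph.length_cycle, ?_⟩
  -- `cycleGraph.cycle` runs downwards from `0`, so it visits `i + 1` at time `n + 2 - i`.
  have hi : (cycleGraph.cycle n).getVert (n + 2 - i + 1) = i := by
    rw [cycleGraph.getVert_cycle (by omega)]
    ext
    simp only [show n + 3 - (n + 2 - i + 1) = (i : ℕ) by omega, Nat.mod_eq_of_lt i.2]
  have hi' : (cycleGraph.cycle n).getVert (n + 2 - i) = i + 1 := by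
    rw [cycleGraph.getVert_cycle (by omega)]
    ext
    simp only [show n + 3 - (n + 2 - i) = (i : ℕ) + 1 by omega, Fin.val_add, Fin.val_one]
  have hadj := (cycleGraph.cycle n).toSubgraph_adj_getVert (i := n + 2 - i)
    (by rw [cycleGraph.length_cycle]; omega)
  rw [hi, hi'] at hadj
  exact Walk.adj_toSubgraph_iff_mem_edges.1 hadj.symm

theorem of_injective_of_adj_add_one {f : Fin (n + 3) → V} (hf : Function.Injective f)
    (hadj : ∀ i, G.Adj (f i) (f (i + 1))) (i : Fin (n + 3)) :
    LiesOnCycle G (n + 3) s(f i, f (i + 1)) := by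
  let φ : cycleGraph (n + 3) →g G := ⟨f, by
    rintro a b (hab | hab)
    · rw [eq_add_of_sub_eq' hab]
      exact (hadj b).symm
    · rw [eq_add_of_sub_eq' hab]
      exact hadj a⟩
  exact (cycleGraph_add_one i).map φ hf

theorem of_injOn_of_adj_succ {f : ℕ → V} (hn : 3 ≤ n) (hf : Set.InjOn f (Set.Iio n))
    (hadj : ∀ i, i + 1 < n → G.Adj (f i) (f (i + 1))) (hlast : G.Adj (f (n - 1)) (f 0))
    {i : ℕ} (hi : i + 1 < n) : LiesOnCycle G n s(f i, f (i + 1)) := by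
  obtain ⟨m, rfl⟩ := Nat.exists_eq_add_of_le' hn
  have hadj' (j : Fin (m + 3)) : G.Adj (f j) (f (j + 1 : Fin (m + 3))) := by
    rcases eq_or_ne j (Fin.last _) with rfl | hj
    · simpa using hlast
    · have hj : (j : ℕ) + 1 < m + 3 := by have := Fin.val_lt_last hj; omega
      rw [Fin.val_add_one_of_lt' hj]
      exact hadj j hj
  have h := of_injective_of_adj_add_one (fun a b hab => Fin.ext (hf a.2 b.2 hab)) hadj'
    ⟨i, by omega⟩
  rwa [Fin.val_add_one_of_lt' hi] at h

end LiesOnCycle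

namespace HkS

variable {k s p : ℕ} {x y u v : Fin (2 * k + 1)}

theorem adj_iff : (HkS k s).Adj x y ↔ (x : ℕ) ≠ y ∧
    ((y : ℕ) = x + 1 ∨ (x : ℕ) = y + 1 ∨ ((x : ℕ) < s ∧ (y : ℕ) < s) ∨
      (2 * k - s + 1 ≤ (x : ℕ) ∧ 2 * k - s + 1 ≤ (y : ℕ)) ∨
      (((x : ℕ) < s ∨ 2 * k - s + 1 ≤ (x : ℕ)) ∧ inC_HkS k s y) ∨
      (((y : ℕ) < s ∨ 2 * k - s + 1 ≤ (y : ℕ)) ∧ inC_HkS k s x)) := by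
  simp only [HkS, fromRel_adj, ne_eq, Fin.ext_iff]
  tauto

/-- Reversal of the underlying path, which exchanges `A` and `B`. -/
def revHom (k s : ℕ) : HkS k s →g HkS k s where
  toFun := Fin.rev
  map_rel' h := by
    rw [adj_iff] at h ⊢
    simp only [inC_HkS, Fin.val_rev] at h ⊢
    omega

theorem liesOnCycle_of_rev {n : ℕ} (h : LiesOnCycle (HkS k s) n s(y.rev, x.rev)) :
    LiesOnCycle (HkS k s) n s(x, y) := by
  simpa [revHom] using (h.map (revHom k s) Fin.rev_injective).symm

theorem areTwins_of_lt (hs : s ≤ k) (hu : (u : ℕ) < s) (hv : (v : ℕ) < s) :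
    AreTwins (HkS k s) u v := by
  intro w hwu hwv
  rw [ne_eq, Fin.ext_iff] at hwu hwv
  simp only [adj_iff, inC_HkS]
  omega

theorem areTwins_of_ge (hs : s ≤ k) (hu : 2 * k - s + 1 ≤ (u : ℕ))
    (hv : 2 * k - s + 1 ≤ (v : ℕ)) : AreTwins (HkS k s) u v := by
  intro w hwu hwv
  rw [ne_eq, Fin.ext_iff] at hwu hwv
  simp only [adj_iff, inC_HkS]
  omega

/-- The `i`-th vertex, for `i < 2k`, of the `2k`-cycle in `H_k(s)` that omits the vertex `p` of `D`:
the cycle runs through `A` and on to `p - 1`, then through `B`, then from `p + 1` to `2k - s`. For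
these `i` the reduction modulo `2k + 1` in `Fin.ofNat` does nothing. -/
def cycleAvoiding (k s p i : ℕ) : Fin (2 * k + 1) :=
  Fin.ofNat _ (if i < p then i else if i < p + s then i + (2 * k - s + 1) - p else i + 1 - s)

theorem val_cycleAvoiding (hp : inD_HkS k s p) {i : ℕ} (hi : i < 2 * k) :
    (cycleAvoiding k s p i : ℕ) =
      if i < p then i else if i < p + s then i + (2 * k - s + 1) - p else i + 1 - s := by
  obtain ⟨_, _, _⟩ := hp
  refine Nat.mod_eq_of_lt ?_
  split_ifs <;> omega

theorem injOn_cycleAvoiding (hp : inD_HkS k s p) :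
    Set.InjOn (cycleAvoiding k s p) (Set.Iio (2 * k)) := by
  intro i hi j hj hij
  have hval := congrArg Fin.val hij
  rw [val_cycleAvoiding hp hi, val_cycleAvoiding hp hj] at hval
  obtain ⟨_, _, _⟩ := hp
  rw [Set.mem_Iio] at hi hj
  split_ifs at hval <;> omega

theorem adj_cycleAvoiding_succ (hs : 1 ≤ s) (hp : inD_HkS k s p) {i : ℕ} (hi : i + 1 < 2 * k) :
    (HkS k s).Adj (cycleAvoiding k s p i) (cycleAvoiding k s p (i + 1)) := by
  rw [adj_iff, val_cycleAvoiding hp (by omega), val_cycleAvoiding hp hi]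
  obtain ⟨_, _, _⟩ := hp
  unfold inC_HkS
  split_ifs <;> omega

theorem adj_cycleAvoiding_last (hs : 1 ≤ s) (hp : inD_HkS k s p) :
    (HkS k s).Adj (cycleAvoiding k s p (2 * k - 1)) (cycleAvoiding k s p 0) := by
  have hk : 0 < 2 * k := by obtain ⟨_, _, _⟩ := hp; omega
  rw [adj_iff, val_cycleAvoiding hp (by omega), val_cycleAvoiding hp hk]
  obtain ⟨_, _, _⟩ := hp
  unfold inC_HkS
  split_ifs <;> omega

theorem cycleAvoiding_eq_iff (hp : inD_HkS k s p) {i : ℕ} (hi : i < 2 * k) :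
    cycleAvoiding k s p i = x ↔ i < p ∧ (x : ℕ) = i ∨
      p ≤ i ∧ i < p + s ∧ (x : ℕ) = i + (2 * k - s + 1) - p ∨ p + s ≤ i ∧ (x : ℕ) = i + 1 - s := by
  rw [Fin.ext_iff, val_cycleAvoiding hp hi]
  split_ifs <;> omega

theorem liesOnCycle_of_cycleAvoiding_eq (hs : 1 ≤ s) (hp : inD_HkS k s p) {i : ℕ}
    (hi : i + 1 < 2 * k) (hx : cycleAvoiding k s p i = x) (hy : cycleAvoiding k s p (i + 1) = y) :
    LiesOnCycle (HkS k s) (2 * k) s(x, y) := by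
  have hk : 3 ≤ 2 * k := by have ⟨_, _, _⟩ := hp; omega
  rw [← hx, ← hy]
  exact .of_injOn_of_adj_succ hk (injOn_cycleAvoiding hp)
    (fun _ => adj_cycleAvoiding_succ hs hp) (adj_cycleAvoiding_last hs hp) hi

theorem liesOnCycle_of_val_eq_succ (hs : 1 ≤ s) (hp : inD_HkS k s p) (hxp : (x : ℕ) ≠ p)
    (hyp : (y : ℕ) ≠ p) (hxy : (y : ℕ) = x + 1) (hy : (y : ℕ) ≤ 2 * k - s) :
    LiesOnCycle (HkS k s) (2 * k) s(x, y) := by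
  have ⟨_, _, _⟩ := hp
  rcases lt_or_gt_of_ne hxp with hx | hx
  · have hi : (x : ℕ) + 1 < 2 * k := by omega
    have hix : cycleAvoiding k s p x = x := (cycleAvoiding_eq_iff hp (by omega)).2 (by omega)
    have hiy : cycleAvoiding k s p (x + 1) = y := (cycleAvoiding_eq_iff hp hi).2 (by omega)
    exact liesOnCycle_of_cycleAvoiding_eq hs hp hi hix hiy
  · have hi : (x : ℕ) + s - 1 + 1 < 2 * k := by omega
    have hix : cycleAvoiding k s p (x + s - 1) = x :=
      (cycleAvoiding_eq_iff hp (by omega)).2 (by omega)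
    have hiy : cycleAvoiding k s p (x + s - 1 + 1) = y :=
      (cycleAvoiding_eq_iff hp hi).2 (by omega)
    exact liesOnCycle_of_cycleAvoiding_eq hs hp hi hix hiy

theorem liesOnCycle_of_succ_mem_D_of_eq_first_B (hp : inD_HkS k s (x + 1))
    (hy : (y : ℕ) = 2 * k - s + 1) : LiesOnCycle (HkS k s) (2 * k) s(x, y) := by
  have ⟨_, _, _⟩ := hp
  have hi : (x : ℕ) + 1 < 2 * k := by omega
  have hix : cycleAvoiding k s (x + 1) x = x := (cycleAvoiding_eq_iff hp (by omega)).2 (by omega)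
  have hiy : cycleAvoiding k s (x + 1) (x + 1) = y := (cycleAvoiding_eq_iff hp hi).2 (by omega)
  exact liesOnCycle_of_cycleAvoiding_eq (by omega) hp hi hix hiy

theorem liesOnCycle_of_pred_mem_D_of_eq_last_B (hs : 1 ≤ s) (hp : inD_HkS k s p)
    (hx : (x : ℕ) = p + 1) (hy : (y : ℕ) = 2 * k) : LiesOnCycle (HkS k s) (2 * k) s(x, y) := by
  have ⟨_, _, _⟩ := hp
  have hi : p + s - 1 + 1 < 2 * k := by omega
  have hiy : cycleAvoiding k s p (p + s - 1) = y :=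
    (cycleAvoiding_eq_iff hp (by omega)).2 (by omega)
  have hix : cycleAvoiding k s p (p + s - 1 + 1) = x := (cycleAvoiding_eq_iff hp hi).2 (by omega)
  exact (liesOnCycle_of_cycleAvoiding_eq hs hp hi hiy hix).symm

theorem liesOnCycle_of_mem_A (hs : s < k) (hxy : (x : ℕ) < y) (hy : (y : ℕ) < s) :
    LiesOnCycle (HkS k s) (2 * k) s(x, y) := by
  let v₀ : Fin (2 * k + 1) := ⟨0, by omega⟩
  let v₁ : Fin (2 * k + 1) := ⟨1, by omega⟩
  have hv₀ : (v₀ : ℕ) < s := show 0 < s by omega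
  have hv₁ : (v₁ : ℕ) < s := show 1 < s by omega
  have hp : inD_HkS k s (s + 1) := ⟨by omega, by omega, by omega⟩
  have h₀₁ : LiesOnCycle (HkS k s) (2 * k) s(v₀, v₁) :=
    liesOnCycle_of_val_eq_succ (by omega) hp (by omega) (by omega) rfl (by omega)
  have h₀y : LiesOnCycle (HkS k s) (2 * k) s(v₀, y) :=
    h₀₁.replace_twin (areTwins_of_lt hs.le hv₁ hy)
      (Fin.ne_of_val_ne (show 0 ≠ (y : ℕ) by omega))
  exact .symm <| h₀y.symm.replace_twin (areTwins_of_lt hs.le hv₀ (hxy.trans hy))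
    (Fin.ne_of_val_ne hxy.ne')

theorem liesOnCycle_of_mem_C_of_mem_B (hs : s < k) (hx : inC_HkS k s x)
    (hy : 2 * k - s + 1 ≤ (y : ℕ)) : LiesOnCycle (HkS k s) (2 * k) s(x, y) := by
  have ⟨_, _, _⟩ := hx
  have of_twin (b : Fin (2 * k + 1)) (hb : 2 * k - s + 1 ≤ (b : ℕ))
      (h : LiesOnCycle (HkS k s) (2 * k) s(x, b)) : LiesOnCycle (HkS k s) (2 * k) s(x, y) :=
    h.replace_twin (areTwins_of_ge hs.le hb hy) (Fin.ne_of_val_ne (by omega))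
  by_cases hlast : (x : ℕ) = 2 * k - s
  · have hp : inD_HkS k s (2 * k - s - 1) := ⟨by omega, by omega, by omega⟩
    exact of_twin (Fin.last _) (by rw [Fin.val_last]; omega)
      (liesOnCycle_of_pred_mem_D_of_eq_last_B (by omega) hp (by omega) rfl)
  · have hp : inD_HkS k s (x + 1) := ⟨by omega, by omega, by omega⟩
    exact of_twin ⟨2 * k - s + 1, by omega⟩ le_rfl
      (liesOnCycle_of_succ_mem_D_of_eq_first_B hp rfl)

theorem liesOnCycle_of_mem_C_union_D (hs₁ : 1 ≤ s) (hs : s + 2 ≤ k) (hx : s ≤ (x : ℕ))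
    (hy : (y : ℕ) ≤ 2 * k - s) (hxy : (y : ℕ) = x + 1) :
    LiesOnCycle (HkS k s) (2 * k) s(x, y) := by
  have hp₁ : inD_HkS k s (s + 1) := ⟨by omega, by omega, by omega⟩
  have hp₃ : inD_HkS k s (s + 3) := ⟨by omega, by omega, by omega⟩
  by_cases h : (x : ℕ) ≤ s + 1
  · exact liesOnCycle_of_val_eq_succ hs₁ hp₃ (by omega) (by omega) hxy hy
  · exact liesOnCycle_of_val_eq_succ hs₁ hp₁ (by omega) (by omega) hxy hy

theorem liesOnCycle_of_adj_of_lt (hs₁ : 1 ≤ s) (hs : s + 2 ≤ k) (h : (HkS k s).Adj x y)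
    (hxy : (x : ℕ) < y) : LiesOnCycle (HkS k s) (2 * k) s(x, y) := by
  simp only [adj_iff, inC_HkS] at h
  by_cases hyA : (y : ℕ) < s
  · exact liesOnCycle_of_mem_A (by omega) hxy hyA
  by_cases hxB : 2 * k - s + 1 ≤ (x : ℕ)
  · have hyx : (y.rev : ℕ) < x.rev := by simp only [Fin.val_rev]; omega
    have hxA : (x.rev : ℕ) < s := by rw [Fin.val_rev]; omega
    exact liesOnCycle_of_rev (liesOnCycle_of_mem_A (by omega) hyx hxA)
  by_cases hxA : (x : ℕ) < s
  · have hyC : inC_HkS k s y.rev := by simp only [inC_HkS, Fin.val_rev]; omega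
    have hxB : 2 * k - s + 1 ≤ (x.rev : ℕ) := by rw [Fin.val_rev]; omega
    exact liesOnCycle_of_rev (liesOnCycle_of_mem_C_of_mem_B (by omega) hyC hxB)
  by_cases hyB : 2 * k - s + 1 ≤ (y : ℕ)
  · have hxC : inC_HkS k s x := ⟨by omega, by omega, by omega⟩
    exact liesOnCycle_of_mem_C_of_mem_B (by omega) hxC hyB
  · exact liesOnCycle_of_mem_C_union_D hs₁ hs (by omega) (by omega) (by omega)

theorem liesOnCycle_of_adj (hs₁ : 1 ≤ s) (hs : s + 2 ≤ k) (h : (HkS k s).Adj x y) :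
    LiesOnCycle (HkS k s) (2 * k) s(x, y) := by
  rcases lt_or_gt_of_ne (Fin.val_ne_of_ne h.ne) with hxy | hyx
  · exact liesOnCycle_of_adj_of_lt hs₁ hs h hxy
  · exact (liesOnCycle_of_adj_of_lt hs₁ hs h.symm hyx).symm

end HkS

namespace HkM2

variable {k : ℕ} {x y u v : Fin (2 * k + 1)}

theorem adj_iff : (HkM2 k).Adj x y ↔ (x : ℕ) ≠ y ∧
    (((x : ℕ) = 0 ∧ (y : ℕ) = 1) ∨ ((y : ℕ) = 0 ∧ (x : ℕ) = 1) ∨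
      ((x : ℕ) = 2 * k - 1 ∧ (y : ℕ) = 2 * k) ∨ ((y : ℕ) = 2 * k - 1 ∧ (x : ℕ) = 2 * k) ∨
      (inC_HkM2 k x ∧ ¬ inC_HkM2 k y) ∨ (inC_HkM2 k y ∧ ¬ inC_HkM2 k x)) := by
  simp only [HkM2, fromRel_adj, ne_eq, Fin.ext_iff]
  tauto

theorem hkS_two_le : HkS k 2 ≤ HkM2 k := by
  intro x y h
  simp only [HkS.adj_iff, inC_HkS] at h
  simp only [adj_iff, inC_HkM2]
  omega

theorem areTwins_of_mem_C (hu : inC_HkM2 k u) (hv : inC_HkM2 k v) : AreTwins (HkM2 k) u v := by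
  intro w _ _
  unfold inC_HkM2 at hu hv
  simp only [adj_iff, inC_HkM2]
  omega

theorem adj_hkS_two_of_mem_C (hx : inC_HkM2 k x) (hyC : ¬ inC_HkM2 k y) (hyD : ¬ inD_HkM2 k y) :
    (HkS k 2).Adj x y := by
  unfold inC_HkM2 at hx hyC
  unfold inD_HkM2 at hyD
  simp only [HkS.adj_iff, inC_HkS]
  omega

theorem liesOnCycle_of_adj_hkS_two (hk : 4 ≤ k) (h : (HkS k 2).Adj x y) :
    LiesOnCycle (HkM2 k) (2 * k) s(x, y) :=
  (HkS.liesOnCycle_of_adj one_le_two hk h).mono hkS_two_le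

theorem liesOnCycle_of_mem_D_of_mem_C (hk : 4 ≤ k) (hx : inD_HkM2 k x) (hy : inC_HkM2 k y) :
    LiesOnCycle (HkM2 k) (2 * k) s(x, y) := by
  have ⟨_, _, _⟩ := hx
  have ⟨_, _, _⟩ := hy
  let z : Fin (2 * k + 1) := ⟨x + 1, by omega⟩
  have hz : inC_HkM2 k z := ⟨show 2 ≤ (x : ℕ) + 1 by omega, show (x : ℕ) + 1 ≤ _ by omega,
    show ((x : ℕ) + 1) % 2 = 0 by omega⟩
  have hxz : (HkS k 2).Adj x z := HkS.adj_iff.2 ⟨(Nat.lt_succ_self _).ne, .inl rfl⟩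
  exact (liesOnCycle_of_adj_hkS_two hk hxz).replace_twin (areTwins_of_mem_C hz hy)
    (Fin.ne_of_val_ne (by omega))

theorem liesOnCycle_of_mem_C_of_notMem_C (hk : 4 ≤ k) (hx : inC_HkM2 k x)
    (hy : ¬ inC_HkM2 k y) : LiesOnCycle (HkM2 k) (2 * k) s(x, y) := by
  by_cases hyD : inD_HkM2 k y
  · exact (liesOnCycle_of_mem_D_of_mem_C hk hyD hx).symm
  · exact liesOnCycle_of_adj_hkS_two hk (adj_hkS_two_of_mem_C hx hy hyD)

theorem liesOnCycle_of_adj (hk : 4 ≤ k) (h : (HkM2 k).Adj x y) :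
    LiesOnCycle (HkM2 k) (2 * k) s(x, y) := by
  obtain ⟨-, hA | hA | hB | hB | ⟨hx, hy⟩ | ⟨hy, hx⟩⟩ := adj_iff.1 h
  iterate 4 exact liesOnCycle_of_adj_hkS_two hk (HkS.adj_iff.2 (by omega))
  · exact liesOnCycle_of_mem_C_of_notMem_C hk hx hy
  · exact (liesOnCycle_of_mem_C_of_notMem_C hk hy hx).symm

end HkM2

/-- Let `k ≥ 4` and `1 ≤ s ≤ k-2`. Every edge of `H_k(s)` lies on a
cycle of length `2k` in `H_k(s)`, and every edge of `H_k(M_2)` lies on a cycle of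
length `2k` in `H_k(M_2)`. -/
theorem HkS_HkM2_edges_on_long_cycle (k s : ℕ) (hk : 4 ≤ k) (hs1 : 1 ≤ s)
    (hs2 : s ≤ k - 2) :
    (∀ e ∈ (HkS k s).edgeSet, ∃ (v : Fin (2 * k + 1)) (c : (HkS k s).Walk v v),
      c.IsCycle ∧ c.length = 2 * k ∧ e ∈ c.edges) ∧
    (∀ e ∈ (HkM2 k).edgeSet, ∃ (v : Fin (2 * k + 1)) (c : (HkM2 k).Walk v v),
      c.IsCycle ∧ c.length = 2 * k ∧ e ∈ c.edges) :=
  ⟨Sym2.ind fun _ _ h => HkS.liesOnCycle_of_adj hs1 (by omega) h,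
    Sym2.ind fun _ _ h => HkM2.liesOnCycle_of_adj hk h⟩
end

section
/- Let k ≥ 4 and 1 ≤ s ≤ k−2. For every x ∈ C and every y ∈ D, there is a path on 2k vertices in H_k(s) starting at x and ending at y. The same holds for H_k(M_2): for every x ∈ C and every y ∈ D, there is a path on 2k vertices in H_k(M_2) starting at x and ending at y. -/
open SimpleGraph

open SimpleGraph

/-!
`H_k(s)` contains the path `x_1 ⋯ x_{2k+1}`, whose two ends are adjacent to every vertex of `C`.
Let `x ∈ C` come before `y ∈ D` on it. Omitting one suitable vertex leaves three runs of
consecutive vertices which these extra edges join into a path from `x` to `y`. The omitted vertex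
is the successor of `x` unless that is `y` itself; in that case it is the predecessor of `x`, or,
if `x` is the first vertex of `C`, the third vertex after `x`. The reflection of the long path is
an automorphism of `H_k(s)`, which settles the case that `y` comes before `x`. Finally, `H_k(2)`
is a subgraph of `H_k(M_2)` with the same sets `C` and `D`.
-/

/-- There is a path in `G` from `u` to `v` whose vertex set is exactly `S`. The vertex set is
prescribed, rather than the number of vertices, so that paths on disjoint sets can be joined. -/
def HasPathOn {V : Type*} (G : SimpleGraph V) (S : Set V) (u v : V) : Prop :=
  ∃ p : G.Walk u v, p.IsPath ∧ {w | w ∈ p.support} = S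

namespace HasPathOn

variable {V W : Type*} {G H : SimpleGraph V} {S T : Set V} {u v w z : V}

theorem singleton (G : SimpleGraph V) (u : V) : HasPathOn G {u} u u :=
  ⟨.nil, .nil, by simp⟩

theorem symm (h : HasPathOn G S u v) : HasPathOn G S v u := by
  obtain ⟨p, hp, rfl⟩ := h
  exact ⟨p.reverse, hp.reverse, by simp⟩

theorem mono (hGH : G ≤ H) (h : HasPathOn G S u v) : HasPathOn H S u v := by
  obtain ⟨p, hp, rfl⟩ := h
  exact ⟨p.mapLe hGH, hp.mapLe hGH, by simp⟩

theorem map {K : SimpleGraph W} (f : G →g K) (hf : Function.Injective f)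
    (h : HasPathOn G S u v) : HasPathOn K (f '' S) (f u) (f v) := by
  obtain ⟨p, hp, rfl⟩ := h
  exact ⟨p.map f, hp.map hf, by ext; simp⟩

theorem append (hS : HasPathOn G S u v) (hT : HasPathOn G T w z) (hST : Disjoint S T)
    (hvw : G.Adj v w) : HasPathOn G (S ∪ T) u z := by
  obtain ⟨p, hp, rfl⟩ := hS
  obtain ⟨q, hq, rfl⟩ := hT
  have hsupport : (p.append (q.cons hvw)).support = p.support ++ q.support := by
    rw [Walk.support_append, Walk.support_cons, List.tail_cons]
  refine ⟨p.append (q.cons hvw), ?_, by ext; simp [hsupport]⟩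
  rw [Walk.isPath_def, hsupport]
  exact hp.support_nodup.append hq.support_nodup (Set.disjoint_left.1 hST)

theorem exists_isPath_length_support (h : HasPathOn G S u v) :
    ∃ p : G.Walk u v, p.IsPath ∧ p.support.length = S.ncard := by
  classical
  obtain ⟨p, hp, rfl⟩ := h
  refine ⟨p, hp, ?_⟩
  rw [← List.coe_toFinset, Set.ncard_coe_finset, List.toFinset_card_of_nodup hp.support_nodup]

end HasPathOn

section LinearOrder

variable {α : Type*} [LinearOrder α] [SuccOrder α] [IsSuccArchimedean α] {G : SimpleGraph α}
  {x y m c d : α}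

theorem hasPathOn_Icc (hG : hasse α ≤ G) (hxy : x ≤ y) : HasPathOn G (Set.Icc x y) x y := by
  induction hxy using Succ.rec with
  | rfl => simpa only [Set.Icc_self] using HasPathOn.singleton G x
  | succ y hxy ih =>
    by_cases hy : IsMax y
    · rwa [hy.succ_eq]
    · have hcov : y ⋖ Order.succ y := Order.covBy_succ_of_not_isMax hy
      rw [← Set.insert_Icc_right_eq_Icc_succ (hxy.trans hcov.le), Set.insert_eq, Set.union_comm]
      have hdisj : Disjoint (Set.Icc x y) {Order.succ y} :=
        Set.disjoint_singleton_right.2 fun hmem => hcov.lt.not_ge hmem.2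
      exact ih.append (.singleton G _) hdisj (hG (.inl hcov))

variable [BoundedOrder α]

theorem hasPathOn_Iic (hG : hasse α ≤ G) (x : α) : HasPathOn G (Set.Iic x) ⊥ x := by
  simpa only [Set.Icc_bot] using hasPathOn_Icc hG (bot_le (a := x))

theorem hasPathOn_Ici (hG : hasse α ≤ G) (x : α) : HasPathOn G (Set.Ici x) x ⊤ := by
  simpa only [Set.Icc_top] using hasPathOn_Icc hG (le_top (a := x))

theorem hasPathOn_compl_singleton_between (hG : hasse α ≤ G) (hxm : x ⋖ m) (hmc : m ⋖ c)
    (hcd : c ≤ d) (hdy : d ⋖ y) (hc : G.Adj ⊥ c) (hd : G.Adj ⊤ d) :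
    HasPathOn G {m}ᶜ x y := by
  have hcover : Set.Iic x ∪ (Set.Icc c d ∪ Set.Ici y) = {m}ᶜ := by
    rw [← hdy.Ioi_eq, Set.Icc_union_Ioi_eq_Ici hcd, ← hmc.Ioi_eq, ← hxm.Iio_eq,
      Set.Iio_union_Ioi]
  have hdisj_last : Disjoint (Set.Icc c d) (Set.Ici y) := by
    rw [Set.disjoint_left]
    grind [hdy.lt]
  have hdisj_first : Disjoint (Set.Iic x) (Set.Icc c d ∪ Set.Ici y) := by
    rw [Set.disjoint_left]
    grind [hxm.lt, hmc.lt, hdy.lt]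
  rw [← hcover]
  exact (hasPathOn_Iic hG x).symm.append
    ((hasPathOn_Icc hG hcd).append (hasPathOn_Ici hG y).symm hdisj_last hd.symm) hdisj_first hc

theorem hasPathOn_compl_singleton_before (hG : hasse α ≤ G) (hcm : c ⋖ m) (hmx : m ⋖ x)
    (hxy : x ⋖ y) (hx : G.Adj ⊥ x) (hc : G.Adj ⊤ c) : HasPathOn G {m}ᶜ x y := by
  have hcover : {x} ∪ (Set.Iic c ∪ Set.Ici y) = {m}ᶜ := by
    rw [Set.union_left_comm, ← hxy.Ioi_eq, Set.singleton_union, Set.Ioi_insert, ← hmx.Ioi_eq,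
      ← hcm.Iio_eq, Set.Iio_union_Ioi]
  have hdisj_last : Disjoint (Set.Iic c) (Set.Ici y) := by
    rw [Set.disjoint_left]
    grind [hcm.lt, hmx.lt, hxy.lt]
  have hdisj_first : Disjoint {x} (Set.Iic c ∪ Set.Ici y) := by
    rw [Set.disjoint_left]
    grind [hcm.lt, hmx.lt, hxy.lt]
  rw [← hcover]
  exact (HasPathOn.singleton G x).append
    ((hasPathOn_Iic hG c).append (hasPathOn_Ici hG y).symm hdisj_last hc.symm) hdisj_first hx.symm

theorem hasPathOn_compl_singleton_after (hG : hasse α ≤ G) (hxy : x ⋖ y) (hyc : y ≤ c)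
    (hcm : c ⋖ m) (hmd : m ⋖ d) (hd : G.Adj ⊥ d) (hc : G.Adj ⊤ c) :
    HasPathOn G {m}ᶜ x y := by
  have hcover : Set.Iic x ∪ (Set.Ici d ∪ Set.Icc y c) = {m}ᶜ := by
    rw [Set.union_comm (Set.Ici d), ← Set.union_assoc, ← hxy.Iio_eq, Set.Iio_union_Icc_eq_Iic hyc,
      ← hcm.Iio_eq, ← hmd.Ioi_eq, Set.Iio_union_Ioi]
  have hdisj_last : Disjoint (Set.Ici d) (Set.Icc y c) := by
    rw [Set.disjoint_left]
    grind [hcm.lt, hmd.lt]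
  have hdisj_first : Disjoint (Set.Iic x) (Set.Ici d ∪ Set.Icc y c) := by
    rw [Set.disjoint_left]
    grind [hxy.lt, hcm.lt, hmd.lt]
  rw [← hcover]
  exact (hasPathOn_Iic hG x).symm.append
    ((hasPathOn_Ici hG d).append (hasPathOn_Icc hG hyc).symm hdisj_last hc) hdisj_first hd

end LinearOrder

theorem covBy_of_val_add_one_eq {n : ℕ} {a b : Fin n} (h : (a : ℕ) + 1 = b) : a ⋖ b :=
  Fin.covBy_iff.2 (Nat.covBy_iff_add_one_eq.2 h)

section HkS

variable {k s : ℕ} {x y c : Fin (2 * k + 1)}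

theorem hasse_le_HkS (k s : ℕ) : hasse (Fin (2 * k + 1)) ≤ HkS k s := by
  intro a b hab
  simp only [hasse_adj, Fin.covBy_iff, Nat.covBy_iff_add_one_eq] at hab
  simp only [HkS, fromRel_adj, ne_eq, Fin.ext_iff]
  omega

theorem HkS_adj_bot (hs : 1 ≤ s) (hc : inC_HkS k s c) : (HkS k s).Adj ⊥ c := by
  have hsc := hc.1
  simp only [HkS, fromRel_adj, ne_eq, Fin.ext_iff, bot_eq_zero, Fin.val_zero]
  exact ⟨by omega, .inl (.inr (.inr (.inr ⟨.inl hs, hc⟩)))⟩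

theorem HkS_adj_top (hs : 1 ≤ s) (hc : inC_HkS k s c) : (HkS k s).Adj ⊤ c := by
  obtain ⟨hsc, hcs, -⟩ := id hc
  simp only [HkS, fromRel_adj, ne_eq, Fin.ext_iff, Fin.val_top]
  exact ⟨by omega, .inl (.inr (.inr (.inr ⟨.inr (by omega), hc⟩)))⟩

theorem inC_HkS_rev (hx : inC_HkS k s x) : inC_HkS k s x.rev := by
  simp only [inC_HkS, Fin.val_rev] at hx ⊢
  omega

theorem inD_HkS_rev (hx : inD_HkS k s x) : inD_HkS k s x.rev := by
  simp only [inD_HkS, Fin.val_rev] at hx ⊢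
  omega

theorem HkS_adj_rev (hs : s ≤ 2 * k) (h : (HkS k s).Adj x y) : (HkS k s).Adj x.rev y.rev := by
  wlog hrel : (y : ℕ) = x + 1 ∨ ((x : ℕ) < s ∧ (y : ℕ) < s) ∨
      (2 * k - s + 1 ≤ (x : ℕ) ∧ 2 * k - s + 1 ≤ (y : ℕ)) ∨
      (((x : ℕ) < s ∨ 2 * k - s + 1 ≤ (x : ℕ)) ∧ inC_HkS k s y) generalizing x y
  · exact (this h.symm (h.2.resolve_left hrel)).symm
  have hne : x.rev ≠ y.rev := Fin.rev_injective.ne h.ne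
  have hx := Fin.val_rev x
  have hy := Fin.val_rev y
  rcases hrel with hstep | hA | hB | ⟨hAB, hC⟩
  · exact (fromRel_adj _ _ _).2 ⟨hne, .inr (.inl (by omega))⟩
  · exact (fromRel_adj _ _ _).2 ⟨hne, .inl (.inr (.inr (.inl (by omega))))⟩
  · exact (fromRel_adj _ _ _).2 ⟨hne, .inl (.inr (.inl (by omega)))⟩
  · exact (fromRel_adj _ _ _).2 ⟨hne, .inl (.inr (.inr (.inr ⟨by omega, inC_HkS_rev hC⟩)))⟩

theorem HkS_exists_hasPathOn_compl_singleton_of_add_one_lt (hs : 1 ≤ s) (hx : inC_HkS k s x)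
    (hy : inD_HkS k s y) (hxy : (x : ℕ) + 1 < y) : ∃ m, HasPathOn (HkS k s) {m}ᶜ x y := by
  simp only [inC_HkS, inD_HkS] at hx hy
  let m : Fin (2 * k + 1) := ⟨x + 1, by omega⟩
  let c : Fin (2 * k + 1) := ⟨x + 2, by omega⟩
  let d : Fin (2 * k + 1) := ⟨y - 1, by omega⟩
  have hxm : x ⋖ m := covBy_of_val_add_one_eq rfl
  have hmc : m ⋖ c := covBy_of_val_add_one_eq rfl
  have hcd : c ≤ d := Fin.le_def.2 (by simp only [c, d]; omega)
  have hdy : d ⋖ y := covBy_of_val_add_one_eq (by simp only [d]; omega)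
  have hc : inC_HkS k s c := by simp only [inC_HkS, c]; omega
  have hd : inC_HkS k s d := by simp only [inC_HkS, d]; omega
  exact ⟨m, hasPathOn_compl_singleton_between (hasse_le_HkS k s) hxm hmc hcd hdy
    (HkS_adj_bot hs hc) (HkS_adj_top hs hd)⟩

theorem HkS_exists_hasPathOn_compl_singleton_of_covBy (hs : 1 ≤ s) (hsk : s + 2 ≤ k)
    (hx : inC_HkS k s x) (hxy : x ⋖ y) : ∃ m, HasPathOn (HkS k s) {m}ᶜ x y := by
  obtain ⟨hsx, hxs, hparity⟩ := id hx
  have hy : (x : ℕ) + 1 = y := Nat.covBy_iff_add_one_eq.1 (Fin.covBy_iff.1 hxy)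
  rcases eq_or_lt_of_le hsx with hsx | hsx
  · let c : Fin (2 * k + 1) := ⟨x + 2, by omega⟩
    let m : Fin (2 * k + 1) := ⟨x + 3, by omega⟩
    let d : Fin (2 * k + 1) := ⟨x + 4, by omega⟩
    have hyc : y ≤ c := Fin.le_def.2 (by simp only [c]; omega)
    have hcm : c ⋖ m := covBy_of_val_add_one_eq rfl
    have hmd : m ⋖ d := covBy_of_val_add_one_eq rfl
    have hc : inC_HkS k s c := by simp only [inC_HkS, c]; omega
    have hd : inC_HkS k s d := by simp only [inC_HkS, d]; omega
    exact ⟨m, hasPathOn_compl_singleton_after (hasse_le_HkS k s) hxy hyc hcm hmd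
      (HkS_adj_bot hs hd) (HkS_adj_top hs hc)⟩
  · let c : Fin (2 * k + 1) := ⟨x - 2, by omega⟩
    let m : Fin (2 * k + 1) := ⟨x - 1, by omega⟩
    have hcm : c ⋖ m := covBy_of_val_add_one_eq (by simp only [c, m]; omega)
    have hmx : m ⋖ x := covBy_of_val_add_one_eq (by simp only [m]; omega)
    have hc : inC_HkS k s c := by simp only [inC_HkS, c]; omega
    exact ⟨m, hasPathOn_compl_singleton_before (hasse_le_HkS k s) hcm hmx hxy
      (HkS_adj_bot hs hx) (HkS_adj_top hs hc)⟩

theorem HkS_exists_hasPathOn_compl_singleton_of_lt (hs : 1 ≤ s) (hsk : s + 2 ≤ k)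
    (hx : inC_HkS k s x) (hy : inD_HkS k s y) (hxy : x < y) :
    ∃ m, HasPathOn (HkS k s) {m}ᶜ x y := by
  rcases eq_or_lt_of_le (Nat.succ_le_of_lt hxy) with hcov | hgap
  · exact HkS_exists_hasPathOn_compl_singleton_of_covBy hs hsk hx (covBy_of_val_add_one_eq hcov)
  · exact HkS_exists_hasPathOn_compl_singleton_of_add_one_lt hs hx hy hgap

theorem HkS_exists_hasPathOn_compl_singleton (hs : 1 ≤ s) (hsk : s + 2 ≤ k)
    (hx : inC_HkS k s x) (hy : inD_HkS k s y) : ∃ m, HasPathOn (HkS k s) {m}ᶜ x y := by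
  rcases lt_trichotomy x y with hxy | rfl | hyx
  · exact HkS_exists_hasPathOn_compl_singleton_of_lt hs hsk hx hy hxy
  · exact absurd (hx.2.2.symm.trans hy.2.2) zero_ne_one
  · obtain ⟨m, hm⟩ := HkS_exists_hasPathOn_compl_singleton_of_lt hs hsk (inC_HkS_rev hx)
      (inD_HkS_rev hy) (Fin.rev_lt_rev.2 hyx)
    let rev : HkS k s →g HkS k s := ⟨Fin.rev, HkS_adj_rev (by omega)⟩
    have hpath := hm.map rev Fin.rev_injective
    refine ⟨m.rev, ?_⟩
    simpa [rev, Set.image_compl_eq Fin.rev_bijective] using hpath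

theorem HkS_two_le_HkM2 (k : ℕ) : HkS k 2 ≤ HkM2 k := by
  intro a b h
  simp only [HkS, HkM2, fromRel_adj, inC_HkS, inC_HkM2, ne_eq, Fin.ext_iff] at h ⊢
  omega

theorem inC_HkS_two_of_inC_HkM2 {i : ℕ} (hi : inC_HkM2 k i) : inC_HkS k 2 i := by
  simp only [inC_HkM2, inC_HkS] at hi ⊢
  omega

theorem inD_HkS_two_of_inD_HkM2 {i : ℕ} (hi : inD_HkM2 k i) : inD_HkS k 2 i := by
  simp only [inD_HkM2, inD_HkS] at hi ⊢
  omega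

end HkS

/-- Let `k ≥ 4` and `1 ≤ s ≤ k-2`. For every `x ∈ C` and `y ∈ D`
there is a path on `2k` vertices in `H_k(s)` from `x` to `y`; the same holds
for `H_k(M_2)`. -/
theorem HkS_HkM2_path_C_to_D (k s : ℕ) (hk : 4 ≤ k) (hs1 : 1 ≤ s) (hs2 : s ≤ k - 2) :
    (∀ x y : Fin (2 * k + 1), inC_HkS k s (x : ℕ) → inD_HkS k s (y : ℕ) →
      ∃ p : (HkS k s).Walk x y, p.IsPath ∧ p.support.length = 2 * k) ∧
    (∀ x y : Fin (2 * k + 1), inC_HkM2 k (x : ℕ) → inD_HkM2 k (y : ℕ) →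
      ∃ p : (HkM2 k).Walk x y, p.IsPath ∧ p.support.length = 2 * k) := by
  have hcard (m : Fin (2 * k + 1)) : ({m}ᶜ : Set _).ncard = 2 * k := by
    rw [Set.ncard_compl, Set.ncard_singleton, Nat.card_fin, Nat.add_sub_cancel]
  refine ⟨fun x y hx hy => ?_, fun x y hx hy => ?_⟩
  · obtain ⟨m, hm⟩ := HkS_exists_hasPathOn_compl_singleton hs1 (by omega) hx hy
    simpa only [hcard] using hm.exists_isPath_length_support
  · obtain ⟨m, hm⟩ := HkS_exists_hasPathOn_compl_singleton one_le_two hk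
      (inC_HkS_two_of_inC_HkM2 hx) (inD_HkS_two_of_inD_HkM2 hy)
    simpa only [hcard] using (hm.mono (HkS_two_le_HkM2 k)).exists_isPath_length_support
end

section
/- Let k1 ≥ k2 ≥ 2 and set k = k1 + k2 + 1. Then for every vertex v of H_k(P_3), the graph H_k(P_3) − v contains P_{2k1+1} ∪ P_{2k2+1} as a subgraph. -/
open SimpleGraph

open SimpleGraph

/-!
Color `P_{2k1+1} ∪ P_{2k2+1}` properly with two colors, the ends of each path getting the majority
color: the classes have sizes `k1 + k2 = k - 1` and `k1 + k2 + 2 = k + 1`. Deleting a vertex outside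
`B` leaves a graph containing `K_{k-1,k+1}`, into which the two classes fit exactly. Deleting a
vertex of `B` leaves only `k - 2` vertices in `B`, so one vertex `w` of the minority class has to be
placed outside `B`. As `w` has at most two neighbors, it can go to `a_2` with its neighbors on `a_1`
and `a_3`; all other edges still run between `B` and its complement.
-/

lemma exists_injOn_mapsTo_eqOn {α β : Type*} {f : α → β} {s t : Set α} {r : Set β}
    (ht : t.Finite) (hst : s ⊆ t) (hf : s.InjOn f) (hfr : s.MapsTo f r)
    (hcard : t.encard ≤ r.encard) :
    ∃ g : α → β, t.InjOn g ∧ t.MapsTo g r ∧ s.EqOn g f := by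
  classical
  rcases isEmpty_or_nonempty α with hα | ⟨⟨x₀⟩⟩
  · exact ⟨f, Set.injOn_of_subsingleton f t, fun x ↦ hα.elim x, Set.eqOn_refl f s⟩
  have : Nonempty β := ⟨f x₀⟩
  have hrest : (t \ s).encard ≤ (r \ f '' s).encard := by
    have hs : s.encard ≠ ⊤ := (ht.subset hst).encard_lt_top.ne
    rwa [← ENat.add_le_add_iff_right hs, Set.encard_sdiff_add_encard_of_subset hst,
      ← hf.encard_image, Set.encard_sdiff_add_encard_of_subset hfr.image_subset]
  obtain ⟨e, her, he⟩ := ht.sdiff.exists_injOn_of_encard_le hrest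
  refine ⟨s.piecewise f e, ?_, fun x hx ↦ ?_, Set.piecewise_eqOn s f e⟩
  · rw [← Set.union_sdiff_cancel hst, Set.injOn_union Set.disjoint_sdiff_right,
      (Set.piecewise_eqOn s f e).injOn_iff,
      ((Set.piecewise_eqOn_compl s f e).mono fun x hx ↦ hx.2).injOn_iff]
    refine ⟨hf, he, fun x hx y hy h ↦ (her hy).2 ⟨x, hx, ?_⟩⟩
    simpa [hx, hy.2] using h
  · by_cases hxs : x ∈ s
    · simpa [hxs] using hfr hxs
    · simpa [hxs] using (her ⟨hx, hxs⟩).1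

lemma containsCopy_iff_isContained {V W : Type*} {G : SimpleGraph V} {H : SimpleGraph W} :
    ContainsCopy G H ↔ H ⊑ G :=
  ⟨fun ⟨f, hf, hadj⟩ ↦ ⟨⟨⟨f, hadj _ _⟩, hf⟩⟩, fun ⟨φ⟩ ↦ ⟨φ, φ.injective, fun _ _ ↦ φ.toHom.map_adj⟩⟩

lemma compl_colorClass_false {V : Type*} {G : SimpleGraph V} (C : G.Coloring Bool) :
    (C.colorClass false)ᶜ = C.colorClass true := by
  ext x
  simp [Coloring.colorClass]

section CompleteBetween

variable {V W : Type*} {G : SimpleGraph V} {H : SimpleGraph W} {s r : Set V}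

lemma isContained_induce_union_of_isIndepSet (hG : G.IsCompleteBetween s r) {t : Set W}
    (ht : H.IsIndepSet t) {f g : W → V} (hf : t.InjOn f) (hfs : t.MapsTo f s)
    (hg : tᶜ.InjOn g) (hgr : tᶜ.MapsTo g r)
    (hadj : ∀ x ∉ t, ∀ y ∉ t, H.Adj x y → G.Adj (g x) (g y)) :
    H ⊑ G.induce (s ∪ r) := by
  classical
  have hmem (x : W) : t.piecewise f g x ∈ s ∪ r := by
    by_cases hx : x ∈ t
    · simpa [hx] using Or.inl (hfs hx)
    · simpa [hx] using Or.inr (hgr hx)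
  have hmap (x y : W) (hxy : H.Adj x y) : G.Adj (t.piecewise f g x) (t.piecewise f g y) := by
    by_cases hx : x ∈ t <;> by_cases hy : y ∈ t <;> simp only [hx, hy, not_false_eq_true,
      Set.piecewise_eq_of_mem, Set.piecewise_eq_of_notMem]
    · exact absurd hxy (ht hx hy hxy.ne)
    · exact hG (hfs hx) (hgr hy)
    · exact (hG (hfs hy) (hgr hx)).symm
    · exact hadj x hx y hy hxy
  have hinj : Function.Injective (t.piecewise f g) := (Set.injective_piecewise_iff t).2
    ⟨hf, hg, fun x hx y hy ↦ hG.disjoint.ne_of_mem (hfs hx) (hgr hy)⟩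
  exact ⟨⟨⟨fun x ↦ ⟨_, hmem x⟩, hmap _ _⟩, fun x y h ↦ hinj (congrArg Subtype.val h)⟩⟩

lemma isContained_induce_union_of_coloring [Finite W] [Nonempty V]
    (hG : G.IsCompleteBetween s r) (C : H.Coloring Bool)
    (hs : (C.colorClass false).encard ≤ s.encard) (hr : (C.colorClass true).encard ≤ r.encard) :
    H ⊑ G.induce (s ∪ r) := by
  obtain ⟨f, hfs, hf⟩ := (Set.toFinite _).exists_injOn_of_encard_le hs
  obtain ⟨g, hgr, hg⟩ := (Set.toFinite _).exists_injOn_of_encard_le hr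
  rw [← compl_colorClass_false] at hg hgr
  refine isContained_induce_union_of_isIndepSet hG (C.isIndepSet_colorClass false) hf hfs hg hgr
    fun x hx y hy hxy ↦ ?_
  rw [← Set.mem_compl_iff, compl_colorClass_false] at hx hy
  exact absurd hxy (C.not_adj_of_mem_colorClass hx hy)

lemma exists_injOn_star [Finite W] {w : W} {a : V} (ha : a ∈ r)
    (hstar : (H.neighborSet w).encard ≤ (G.neighborSet a ∩ r).encard) :
    ∃ g : W → V, (insert w (H.neighborSet w)).InjOn g ∧ (insert w (H.neighborSet w)).MapsTo g r ∧
      ∀ x, H.Adj w x → G.Adj (g w) (g x) := by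
  classical
  have : Nonempty V := ⟨a⟩
  obtain ⟨φ, hφr, hφ⟩ := (Set.toFinite _).exists_injOn_of_encard_le hstar
  have hw : w ∉ H.neighborSet w := H.irrefl
  have heq : (H.neighborSet w).EqOn (Function.update φ w a) φ :=
    fun x hx ↦ Function.update_of_ne (ne_of_mem_of_not_mem hx hw) a φ
  refine ⟨Function.update φ w a, ?_, ?_, fun x hx ↦ ?_⟩
  · rw [Set.injOn_insert hw, heq.injOn_iff, heq.image_eq, Function.update_self]
    exact ⟨hφ, fun ⟨x, hx, hxa⟩ ↦ G.irrefl (hxa ▸ (hφr hx).1 : G.Adj a a)⟩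
  · rintro x (rfl | hx)
    · simpa using ha
    · exact heq hx ▸ (hφr hx).2
  · rw [Function.update_self, heq hx]
    exact (hφr hx).1

lemma isContained_induce_union_of_coloring_of_star [Finite W] (hG : G.IsCompleteBetween s r)
    (C : H.Coloring Bool) {w : W} (hw : C w = false) {a : V} (ha : a ∈ r)
    (hstar : (H.neighborSet w).encard ≤ (G.neighborSet a ∩ r).encard)
    (hs : (C.colorClass false).encard ≤ s.encard + 1)
    (hr : (C.colorClass true).encard + 1 ≤ r.encard) :
    H ⊑ G.induce (s ∪ r) := by
  have : Nonempty V := ⟨a⟩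
  have hneighbor : H.neighborSet w ⊆ C.colorClass true := fun x hx ↦ by
    simpa [hw, Coloring.colorClass] using C.valid hx
  have hcompl : (C.colorClass false \ {w})ᶜ = insert w (C.colorClass true) := by
    rw [Set.compl_sdiff, compl_colorClass_false, Set.singleton_union]
  have hs' : (C.colorClass false \ {w}).encard ≤ s.encard := by
    have hwC : w ∈ C.colorClass false := hw
    rwa [← ENat.add_le_add_iff_right ENat.one_ne_top, Set.encard_sdiff_singleton_add_one hwC]
  obtain ⟨f, hfs, hf⟩ := (Set.toFinite _).exists_injOn_of_encard_le hs'
  obtain ⟨e, he, her, headj⟩ := exists_injOn_star ha hstar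
  obtain ⟨g, hg, hgr, hge⟩ := exists_injOn_mapsTo_eqOn (Set.toFinite _)
    (Set.insert_subset_insert hneighbor) he her ((Set.encard_insert_le _ w).trans hr)
  have hadj {x : W} (hx : H.Adj w x) : G.Adj (g w) (g x) := by
    rw [hge (Set.mem_insert ..), hge (Set.mem_insert_of_mem _ hx)]
    exact headj x hx
  rw [← hcompl] at hg hgr
  refine isContained_induce_union_of_isIndepSet hG
    ((C.isIndepSet_colorClass false).mono Set.sdiff_subset) hf hfs hg hgr fun x hx y hy hxy ↦ ?_
  rw [← Set.mem_compl_iff, hcompl] at hx hy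
  rcases hx with rfl | hx
  · exact hadj hxy
  rcases hy with rfl | hy
  · exact (hadj hxy.symm).symm
  · exact absurd hxy (C.not_adj_of_mem_colorClass hx hy)

end CompleteBetween

lemma encard_colorClass_sum {V W γ : Type*} {G : SimpleGraph V} {H : SimpleGraph W}
    (C : G.Coloring γ) (D : H.Coloring γ) (c : γ) :
    ((C.sum D).colorClass c).encard = (C.colorClass c).encard + (D.colorClass c).encard := by
  have hunion : (C.sum D).colorClass c = Sum.inl '' C.colorClass c ∪ Sum.inr '' D.colorClass c := by
    ext (x | x) <;> simp [Coloring.colorClass, Coloring.sum]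
  rw [hunion, Set.encard_union_eq (by simp [Set.disjoint_left]),
    Sum.inl_injective.encard_image, Sum.inr_injective.encard_image]

lemma encard_neighborSet_pathGraph_le (n : ℕ) (i : Fin n) :
    ((pathGraph n).neighborSet i).encard ≤ 2 := by
  have hmaps : ((pathGraph n).neighborSet i).MapsTo Fin.val {(i : ℕ) - 1, (i : ℕ) + 1} := by
    intro j hj
    rw [mem_neighborSet, pathGraph_adj] at hj
    simp only [Set.mem_insert_iff, Set.mem_singleton_iff]
    omega
  calc ((pathGraph n).neighborSet i).encard
      ≤ ({(i : ℕ) - 1, (i : ℕ) + 1} : Set ℕ).encard :=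
        Set.encard_le_encard_of_injOn hmaps Fin.val_injective.injOn
    _ = 2 := Set.encard_pair (by omega)

lemma encard_neighborSet_sum_pathGraph_le (m n : ℕ) (x : Fin m ⊕ Fin n) :
    ((pathGraph m ⊕g pathGraph n).neighborSet x).encard ≤ 2 := by
  cases x with
  | inl i =>
    rw [neighborSet_sum_inl, Sum.inl_injective.encard_image]
    exact encard_neighborSet_pathGraph_le m i
  | inr i =>
    rw [neighborSet_sum_inr, Sum.inr_injective.encard_image]
    exact encard_neighborSet_pathGraph_le n i

lemma mem_colorClass_false_pathGraph_bicoloring {n : ℕ} {i : Fin n} :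
    i ∈ (pathGraph.bicoloring n).colorClass false ↔ (i : ℕ) % 2 = 1 :=
  decide_eq_false_iff_not.trans Nat.mod_two_ne_zero

lemma encard_colorClass_false_pathGraph_bicoloring (n : ℕ) :
    ((pathGraph.bicoloring n).colorClass false).encard = (n / 2 : ℕ) := by
  have himage : Fin.val '' (pathGraph.bicoloring n).colorClass false =
      (fun j ↦ 2 * j + 1) '' (Finset.range (n / 2) : Set ℕ) := by
    ext i
    simp only [Set.mem_image, mem_colorClass_false_pathGraph_bicoloring, Finset.mem_coe,
      Finset.mem_range]
    constructor
    · rintro ⟨x, hx, rfl⟩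
      exact ⟨x / 2, by omega⟩
    · rintro ⟨j, hj, rfl⟩
      exact ⟨⟨2 * j + 1, by omega⟩, by dsimp only; omega, rfl⟩
  have hinj : Function.Injective fun j : ℕ ↦ 2 * j + 1 := fun i j h ↦ by simpa using h
  rw [← Fin.val_injective.encard_image, himage, hinj.encard_image,
    Set.encard_coe_eq_coe_finsetCard, Finset.card_range]

lemma encard_colorClass_true_pathGraph_bicoloring (n : ℕ) :
    ((pathGraph.bicoloring n).colorClass true).encard = ((n + 1) / 2 : ℕ) := by
  have h : ((pathGraph.bicoloring n).colorClass true).encard +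
      ((pathGraph.bicoloring n).colorClass false).encard = n := by
    rw [← compl_colorClass_false, add_comm, Set.encard_add_encard_compl, Set.encard_univ,
      ENat.card_eq_coe_fintype_card, Fintype.card_fin]
  rw [encard_colorClass_false_pathGraph_bicoloring, ← (Set.toFinite _).cast_ncard_eq] at h
  rw [← (Set.toFinite _).cast_ncard_eq]
  norm_cast at h ⊢
  omega

namespace HkP3

variable {k : ℕ}

/-- The part `B` of `H_k(P_3)`, of size `k - 1`, as a set of vertices; its complement is the part
`A ∪ C`. -/
def partB (k : ℕ) : Set (Fin (2 * k + 1)) := {i | inB_HkP3 k i}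

lemma isCompleteBetween_partB (k : ℕ) : (HkP3 k).IsCompleteBetween (partB k) (partB k)ᶜ :=
  fun _ hx _ hy ↦ (fromRel_adj ..).2
    ⟨ne_of_mem_of_not_mem hx hy, Or.inl (Or.inr (Or.inr ⟨hx, hy⟩))⟩

lemma encard_partB (k : ℕ) : (partB k).encard = (k - 1 : ℕ) := by
  have himage : Fin.val '' partB k = Finset.Icc 3 (k + 1) := by
    ext i
    simp only [partB, inB_HkP3, Set.mem_image, Set.mem_ofPred_eq, Finset.coe_Icc, Set.mem_Icc]
    exact ⟨fun ⟨_, hx, hxi⟩ ↦ hxi ▸ hx, fun hi ↦ ⟨⟨i, by omega⟩, hi, rfl⟩⟩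
  rw [← Fin.val_injective.encard_image, himage, Set.encard_coe_eq_coe_finsetCard, Nat.card_Icc]
  congr 1

lemma encard_compl_partB (hk : 1 ≤ k) : (partB k)ᶜ.encard = (k + 2 : ℕ) := by
  have h := Set.encard_add_encard_compl (partB k)
  rw [encard_partB, Set.encard_univ, ENat.card_eq_coe_fintype_card, Fintype.card_fin,
    ← (Set.toFinite _).cast_ncard_eq] at h
  rw [← (Set.toFinite _).cast_ncard_eq]
  norm_cast at h ⊢
  omega

lemma two_le_encard_neighborSet_inter_compl_partB (hk : 1 ≤ k) :
    2 ≤ ((HkP3 k).neighborSet ⟨1, by omega⟩ ∩ (partB k)ᶜ).encard := by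
  rw [← Set.encard_pair (show (⟨0, by omega⟩ : Fin (2 * k + 1)) ≠ ⟨2, by omega⟩ by simp)]
  refine Set.encard_le_encard ?_
  rintro x (rfl | rfl) <;> simp [HkP3, partB, inB_HkP3]

variable {W : Type*} [Finite W] {H : SimpleGraph W}

lemma isContained_induce_ne_of_notMem_partB (hk : 1 ≤ k) (C : H.Coloring Bool)
    (hfalse : (C.colorClass false).encard ≤ (k - 1 : ℕ))
    (htrue : (C.colorClass true).encard ≤ (k + 1 : ℕ))
    {v : Fin (2 * k + 1)} (hv : v ∉ partB k) : H ⊑ (HkP3 k).induce {u | u ≠ v} := by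
  have hsplit : {u | u ≠ v} = partB k ∪ ((partB k)ᶜ \ {v}) := by
    ext u
    by_cases hu : u ∈ partB k
    · simpa [hu] using ne_of_mem_of_not_mem hu hv
    · simp [hu]
  have hcard : ((partB k)ᶜ \ {v}).encard = (k + 1 : ℕ) := by
    rw [Set.encard_sdiff_singleton_of_mem hv, encard_compl_partB hk]
    norm_cast
  rw [hsplit]
  exact isContained_induce_union_of_coloring
    (fun x hx y hy ↦ isCompleteBetween_partB k hx hy.1) C
    (hfalse.trans_eq (encard_partB k).symm) (htrue.trans_eq hcard.symm)

lemma isContained_induce_ne_of_mem_partB (C : H.Coloring Bool)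
    (hfalse : (C.colorClass false).encard ≤ (k - 1 : ℕ))
    (htrue : (C.colorClass true).encard ≤ (k + 1 : ℕ))
    {w : W} (hw : C w = false) (hdeg : (H.neighborSet w).encard ≤ 2)
    {v : Fin (2 * k + 1)} (hv : v ∈ partB k) : H ⊑ (HkP3 k).induce {u | u ≠ v} := by
  have hk : 1 ≤ k := by have : 3 ≤ (v : ℕ) ∧ (v : ℕ) ≤ k + 1 := hv; omega
  have hsplit : {u | u ≠ v} = partB k \ {v} ∪ (partB k)ᶜ := by
    ext u
    by_cases hu : u ∈ partB k
    · simp [hu]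
    · simpa [hu] using (ne_of_mem_of_not_mem hv hu).symm
  rw [hsplit]
  refine isContained_induce_union_of_coloring_of_star
    (fun x hx y hy ↦ isCompleteBetween_partB k hx.1 hy) C hw
    (a := ⟨1, by omega⟩) (by simp [partB, inB_HkP3])
    (hdeg.trans (two_le_encard_neighborSet_inter_compl_partB hk)) ?_ ?_
  · rwa [Set.encard_sdiff_singleton_add_one hv, encard_partB]
  · rw [encard_compl_partB hk]
    exact add_le_add_left htrue 1

end HkP3

theorem HkP3_delete_vertex_general (k1 k2 : ℕ) (v : Fin (2 * (k1 + k2 + 1) + 1)) :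
    ContainsCopy ((HkP3 (k1 + k2 + 1)).induce {u | u ≠ v})
      (pathGraph (2 * k1 + 1) ⊕g pathGraph (2 * k2 + 1)) := by
  set C := (pathGraph.bicoloring (2 * k1 + 1)).sum (pathGraph.bicoloring (2 * k2 + 1))
  have hfalse : (C.colorClass false).encard = (k1 + k2 : ℕ) := by
    rw [encard_colorClass_sum, encard_colorClass_false_pathGraph_bicoloring,
      encard_colorClass_false_pathGraph_bicoloring]
    norm_cast
    omega
  have htrue : (C.colorClass true).encard = (k1 + k2 + 2 : ℕ) := by
    rw [encard_colorClass_sum, encard_colorClass_true_pathGraph_bicoloring,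
      encard_colorClass_true_pathGraph_bicoloring]
    norm_cast
    omega
  rw [containsCopy_iff_isContained]
  by_cases hv : v ∈ HkP3.partB (k1 + k2 + 1)
  · obtain ⟨w, hw⟩ : (C.colorClass false).Nonempty := by
      have : 3 ≤ (v : ℕ) ∧ (v : ℕ) ≤ k1 + k2 + 1 + 1 := hv
      rw [← Set.encard_pos, hfalse]
      norm_cast
      omega
    exact HkP3.isContained_induce_ne_of_mem_partB C hfalse.le htrue.le hw
      (encard_neighborSet_sum_pathGraph_le _ _ w) hv
  · exact HkP3.isContained_induce_ne_of_notMem_partB (by omega) C hfalse.le htrue.le hv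

/-- Let `k1 ≥ k2 ≥ 2` and `k = k1 + k2 + 1`. Deleting any vertex of
`H_k(P_3)` leaves a graph containing `P_{2k1+1} ∪ P_{2k2+1}` as a subgraph. -/
theorem HkP3_delete_vertex (k1 k2 : ℕ) (hk2 : 2 ≤ k2) (hk12 : k2 ≤ k1) :
    ∀ v : Fin (2 * (k1 + k2 + 1) + 1),
      ContainsCopy ((HkP3 (k1 + k2 + 1)).induce {u | u ≠ v})
        ((pathGraph (2 * k1 + 1)) ⊕g (pathGraph (2 * k2 + 1))) := by
  exact HkP3_delete_vertex_general k1 k2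
end
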